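/- arXiv:2207.07485 — 2 statements merged into one kernel-verified Lean document; each statement's English description precedes it below -/
import Mathlib

section
/- Let σ > 0 and 1 ≤ p < ∞. A function f ∈ D^∞ belongs to the Bernstein–Mellin space B^p_σ(Θ₁,…,Θₙ) if and only if the quantity R(f,σ) = sup over all k ∈ ℕ, all choices of indices 1 ≤ j₁,…,j_k ≤ n and all nonnegative integers l₁,…,l_k of σ^{−(l₁+⋯+l_k)} ‖Θ_{j₁}^{l₁}⋯Θ_{j_k}^{l_k} f‖_{X^p} is finite. -/
/-! The forward implication is immediate with `R = ‖f‖`. The converse is Bernstein's inequality: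
if `h₀, h₁, …` are the successive derivatives of `h₀` under a one-parameter isometry group and
`‖h_k‖ ≤ R σ^k`, then `‖h₁‖ ≤ σ ‖h₀‖` (`bernstein_operator`). It applies to every iterated
Mellin derivative of `f`, in every direction, and gives the sharp bound one derivative at a time.
The dilations preserve the Mellin measure (`measurePreserving_mellinDilate`), so the `U_j` are
indeed isometry groups.

Pairing with a norming functional reduces Bernstein's inequality to a real function `g` on `ℝ` with
`|g| ≤ M` and `|g^{(k)}| ≤ R σ^k` (`bernstein_real`). Its Taylor series is an entire function `G`
of exponential type `σ`, and `F(z) = (G(z) - G(-z)) / 2M` is real with values in `[-1, 1]` on the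
real axis and purely imaginary on the imaginary axis, say `F(iy) = i sinh s`. The map
`F ↦ 2F² - 1` preserves the bound on the real axis and doubles the type, so after `m` steps
Phragmén–Lindelöf gives `cosh (2^m s) ≤ exp (2^m σ y)`. Letting `m → ∞` yields `s ≤ σ y`, i.e.
`Im G(iy) ≤ M sinh (σ y)`, and differentiating at `y = 0` gives `g'(0) ≤ σ M`. -/

open MeasureTheory Filter Topology ENNReal

noncomputable section

/-- `g` is the value at `f` of the infinitesimal generator of the
strongly continuous one-parameter group `T`. -/
def GenDeriv {E : Type*} [NormedAddCommGroup E] [NormedSpace ℂ E]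
    (T : ℝ → E →L[ℂ] E) (f g : E) : Prop :=
  Filter.Tendsto (fun t : ℝ => t⁻¹ • (T t f - f)) (𝓝[≠] (0 : ℝ)) (𝓝 g)

/-- The measure `dμ = dx₁⋯dxₙ/(x₁⋯xₙ)` on `(0,∞)ⁿ ⊂ ℝⁿ`. -/
def mellinMeasure (n : ℕ) : Measure (Fin n → ℝ) :=
  ((volume : Measure (Fin n → ℝ)).restrict {x | ∀ i, 0 < x i}).withDensity
    fun x => ∏ i, ENNReal.ofReal (x i)⁻¹

/-- Dilation of the `j`-th coordinate by `e^t`. -/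
def mellinDilate {n : ℕ} (j : Fin n) (t : ℝ) (x : Fin n → ℝ) : Fin n → ℝ :=
  Function.update x j (Real.exp t * x j)

/-- `U` is the family of Mellin translation groups `(U_j(t)f)(x) = f(x₁,…,e^t x_j,…,xₙ)`. -/
def IsMellinTranslation {n : ℕ} (p : ℝ≥0∞) [Fact (1 ≤ p)]
    (U : Fin n → ℝ → (Lp ℂ p (mellinMeasure n) →L[ℂ] Lp ℂ p (mellinMeasure n))) : Prop :=
  ∀ (j : Fin n) (t : ℝ) (f : Lp ℂ p (mellinMeasure n)),
    (U j t f : (Fin n → ℝ) → ℂ) =ᵐ[mellinMeasure n] fun x => f (mellinDilate j t x)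

/-- Iterated generator: `IsIterDeriv U [j₁,…,j_k] f g` means `g = Θ_{j₁}⋯Θ_{j_k} f`. -/
def IsIterDeriv {E : Type*} [NormedAddCommGroup E] [NormedSpace ℂ E] {n : ℕ}
    (U : Fin n → ℝ → E →L[ℂ] E) : List (Fin n) → E → E → Prop
  | [], f, g => g = f
  | j :: L, f, g => ∃ h, IsIterDeriv U L f h ∧ GenDeriv (U j) h g

/-- Modulus of continuity `ω^m(s,f) = sup_{0≤τ≤s} ‖(T(τ)-I)^m f‖`. -/
def omegaMod {E : Type*} [NormedAddCommGroup E] [NormedSpace ℂ E]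
    (T : ℝ → E →L[ℂ] E) (m : ℕ) (s : ℝ) (f : E) : ℝ :=
  sSup ((fun τ => ‖((T τ - 1) ^ m) f‖) '' Set.Icc 0 s)

/-- Mixed modulus of continuity
`Ω^r(s,f) = Σ_{j₁,…,j_r} sup_{0≤τᵢ≤s} ‖(U_{j₁}(τ₁)-I)⋯(U_{j_r}(τ_r)-I) f‖`. -/
def mixedMod {E : Type*} [NormedAddCommGroup E] [NormedSpace ℂ E] {n : ℕ}
    (U : Fin n → ℝ → E →L[ℂ] E) (r : ℕ) (s : ℝ) (f : E) : ℝ :=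
  ∑ J : Fin r → Fin n,
    sSup ((fun τ : Fin r → ℝ => ‖((List.ofFn fun i => U (J i) (τ i) - 1).prod) f‖) ''
      Set.univ.pi fun _ => Set.Icc 0 s)

/-- The list `[1,…,1,2,…,2,…]` encoding the operator `Θ₁^{a₁}⋯Θₙ^{aₙ}`. -/
def multiIndexList {n : ℕ} (a : Fin n → ℕ) : List (Fin n) :=
  (List.ofFn fun i => List.replicate (a i) i).flatten

/-- `f` belongs to the Sobolev–Mellin space `W^r`: all derivatives `Θ₁^{a₁}⋯Θₙ^{aₙ} f`
with `|a| = r` exist. -/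
def memW {E : Type*} [NormedAddCommGroup E] [NormedSpace ℂ E] {n : ℕ}
    (U : Fin n → ℝ → E →L[ℂ] E) (r : ℕ) (f : E) : Prop :=
  ∀ a : Fin n → ℕ, (∑ i, a i) = r → ∃ g, IsIterDeriv U (multiIndexList a) f g

/-- The value `Θ_{j₁}⋯Θ_{j_k} f` (or `0` if it does not exist). -/
def iterDerivVal {E : Type*} [NormedAddCommGroup E] [NormedSpace ℂ E] {n : ℕ}
    (U : Fin n → ℝ → E →L[ℂ] E) (L : List (Fin n)) (f : E) : E :=
  haveI := Classical.propDecidable (∃ g, IsIterDeriv U L f g)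
  if h : ∃ g, IsIterDeriv U L f g then h.choose else 0

/-- The Sobolev–Mellin norm `‖f‖ + Σ_{|a|=r} ‖Θ₁^{a₁}⋯Θₙ^{aₙ} f‖` (for `r = 0` it is `‖f‖`). -/
def WNorm {E : Type*} [NormedAddCommGroup E] [NormedSpace ℂ E] {n : ℕ}
    (U : Fin n → ℝ → E →L[ℂ] E) (r : ℕ) (f : E) : ℝ :=
  ‖f‖ + ∑ a ∈ (Fintype.piFinset fun _ : Fin n => Finset.range (r + 1)).filter
      (fun a => (∑ i, a i) = r ∧ r ≠ 0),
    ‖iterDerivVal U (multiIndexList a) f‖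

/-- Peetre's K-functional for the pair `(X^p, W^r_p)`. -/
def Kfun {E : Type*} [NormedAddCommGroup E] [NormedSpace ℂ E] {n : ℕ}
    (U : Fin n → ℝ → E →L[ℂ] E) (r : ℕ) (t : ℝ) (f : E) : ℝ :=
  sInf {v | ∃ f₀ f₁ : E, f = f₀ + f₁ ∧ memW U r f₁ ∧ v = ‖f₀‖ + t * WNorm U r f₁}

/-! ### Entire functions of exponential type -/

/-- Phragmén–Lindelöf: an entire function of exponential type `τ` which is bounded by `M` on the
real axis is bounded by `M e^{τ y}` at the point `iy`, `y ≥ 0`. -/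
lemma norm_imag_axis_le {F : ℂ → ℂ} (hd : Differentiable ℂ F) {τ C M : ℝ}
    (hτ : 0 ≤ τ) (hgrow : ∀ z, ‖F z‖ ≤ C * Real.exp (τ * ‖z‖)) (hM : ∀ x : ℝ, ‖F x‖ ≤ M)
    {y : ℝ} (hy : 0 ≤ y) : ‖F (y * Complex.I)‖ ≤ M * Real.exp (τ * y) := by
  have key : ‖Complex.exp (-τ * (y : ℂ)) * F (y * Complex.I)‖ ≤ M := by
    refine PhragmenLindelof.right_half_plane_of_bounded_on_real
      (f := fun w : ℂ => Complex.exp (-τ * w) * F (w * Complex.I)) (z := (y : ℂ))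
      ?_ ⟨1, by norm_num, τ, ?_⟩ ?_ ?_ (by simpa using hy)
    · apply Differentiable.diffContOnCl
      exact (by fun_prop : Differentiable ℂ fun w : ℂ => Complex.exp (-τ * w)).mul
        (hd.comp (by fun_prop))
    · refine Asymptotics.IsBigO.of_bound C ?_
      refine Filter.eventually_inf_principal.2 (Filter.Eventually.of_forall fun z hz => ?_)
      have hz' : 0 < z.re := hz
      rw [norm_mul, Complex.norm_exp]
      have h1 : Real.exp ((-τ * z : ℂ).re) ≤ 1 := by
        rw [Real.exp_le_one_iff]
        simp
        positivity
      have h2 := hgrow (z * Complex.I)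
      rw [norm_mul, Complex.norm_I, mul_one] at h2
      rw [Real.rpow_one, Real.norm_eq_abs, Real.abs_exp]
      calc _ ≤ 1 * ‖F (z * Complex.I)‖ := by gcongr
        _ ≤ _ := by simpa using h2
    · refine ⟨C, Filter.eventually_map.2 ?_⟩
      filter_upwards [Filter.eventually_ge_atTop 0] with x hx
      have h2 := hgrow (x * Complex.I)
      rw [norm_mul, Complex.norm_I, mul_one, Complex.norm_real, Real.norm_of_nonneg hx] at h2
      rw [norm_mul, Complex.norm_exp]
      have : (-τ * x : ℂ).re = -(τ * x) := by simp
      rw [this, Real.exp_neg, inv_mul_le_iff₀ (Real.exp_pos _)]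
      linarith
    · intro x
      rw [norm_mul, Complex.norm_exp]
      have h1 : (-τ * (x * Complex.I) : ℂ).re = 0 := by simp
      have h2 : (x * Complex.I * Complex.I : ℂ) = ((-x : ℝ) : ℂ) := by
        rw [mul_assoc, Complex.I_mul_I]; simp
      rw [h1, h2, Real.exp_zero, one_mul]
      exact hM _
  rw [norm_mul, Complex.norm_exp] at key
  have : (-τ * y : ℂ).re = -(τ * y) := by simp
  rw [this, Real.exp_neg, inv_mul_le_iff₀ (Real.exp_pos _)] at key
  linarith

lemma growth_two_mul_sq_sub_one {F : ℂ → ℂ} {τ C : ℝ} (hτ : 0 ≤ τ)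
    (hgrow : ∀ z, ‖F z‖ ≤ C * Real.exp (τ * ‖z‖)) (z : ℂ) :
    ‖2 * F z ^ 2 - 1‖ ≤ (2 * C ^ 2 + 1) * Real.exp (2 * τ * ‖z‖) := by
  have h1 : ‖F z‖ ^ 2 ≤ C ^ 2 * Real.exp (2 * τ * ‖z‖) := by
    calc ‖F z‖ ^ 2 ≤ (C * Real.exp (τ * ‖z‖)) ^ 2 := by gcongr; exact hgrow z
      _ = _ := by rw [mul_pow, ← Real.exp_nat_mul]; congr 2; push_cast; ring
  have h2 : 1 ≤ Real.exp (2 * τ * ‖z‖) := Real.one_le_exp (by positivity)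
  calc ‖2 * F z ^ 2 - 1‖ ≤ ‖2 * F z ^ 2‖ + ‖(1 : ℂ)‖ := norm_sub_le _ _
    _ = 2 * ‖F z‖ ^ 2 + 1 := by simp
    _ ≤ _ := by linarith

lemma real_two_mul_sq_sub_one {F : ℂ → ℂ} (hreal : ∀ x : ℝ, ∃ r : ℝ, |r| ≤ 1 ∧ F x = r) (x : ℝ) :
    ∃ r : ℝ, |r| ≤ 1 ∧ 2 * F x ^ 2 - 1 = r := by
  obtain ⟨r, hr, h⟩ := hreal x
  refine ⟨2 * r ^ 2 - 1, ?_, by rw [h]; push_cast; ring⟩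
  have := (sq_le_one_iff_abs_le_one r).2 hr
  rw [abs_le]
  constructor <;> nlinarith [sq_nonneg r]

/-- Iterating `F ↦ 2F² - 1` (the second Chebyshev polynomial) doubles both the exponential type
and the parameter `s` in `F(iy) = ± cosh s`, while preserving `F(ℝ) ⊆ [-1, 1]`. -/
lemma cosh_two_pow_mul_le (m : ℕ) : ∀ {F : ℂ → ℂ}, Differentiable ℂ F → ∀ {τ C : ℝ}, 0 ≤ τ →
    (∀ z, ‖F z‖ ≤ C * Real.exp (τ * ‖z‖)) → (∀ x : ℝ, ∃ r : ℝ, |r| ≤ 1 ∧ F x = r) →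
    ∀ {y s : ℝ}, 0 ≤ y → F (y * Complex.I) ^ 2 = ((Real.cosh s ^ 2 : ℝ) : ℂ) →
    Real.cosh (2 ^ m * s) ≤ Real.exp (2 ^ m * (τ * y)) := by
  induction m with
  | zero =>
    intro F hd τ C hτ hgrow hreal y s hy hs
    have h := norm_imag_axis_le hd hτ hgrow (M := 1) (fun x => by
      obtain ⟨r, hr, h⟩ := hreal x
      rw [h, Complex.norm_real]; exact hr) hy
    have h2 : ‖F (y * Complex.I)‖ ^ 2 = Real.cosh s ^ 2 := by
      rw [← norm_pow, hs, Complex.norm_real, Real.norm_of_nonneg (by positivity)]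
    rw [pow_left_inj₀ (norm_nonneg _) (Real.cosh_pos s).le two_ne_zero] at h2
    rw [h2] at h
    simpa using h
  | succ m ih =>
    intro F hd τ C hτ hgrow hreal y s hy hs
    have h := ih (F := fun z => 2 * F z ^ 2 - 1) (by fun_prop) (τ := 2 * τ) (C := 2 * C ^ 2 + 1)
      (by positivity)
      (growth_two_mul_sq_sub_one hτ hgrow) (real_two_mul_sq_sub_one hreal)
      (y := y) (s := 2 * s) hy ?_
    · convert h using 2 <;> ring
    · have : 2 * F (y * Complex.I) ^ 2 - 1 = ((Real.cosh (2 * s) : ℝ) : ℂ) := by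
        rw [hs, Real.cosh_two_mul, Real.sinh_sq]; push_cast; ring
      rw [this]; push_cast; ring

/-- An entire function of type `τ` with values in `[-1, 1]` on `ℝ` and with value `i sinh s` at
`iy` satisfies `s ≤ τ y`. -/
lemma le_of_imag_axis_eq_sinh {F : ℂ → ℂ} (hd : Differentiable ℂ F) {τ C : ℝ} (hτ : 0 ≤ τ)
    (hgrow : ∀ z, ‖F z‖ ≤ C * Real.exp (τ * ‖z‖)) (hreal : ∀ x : ℝ, ∃ r : ℝ, |r| ≤ 1 ∧ F x = r)
    {y s : ℝ} (hy : 0 ≤ y) (hs : F (y * Complex.I) = (Real.sinh s : ℝ) * Complex.I) :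
    s ≤ τ * y := by
  have h : ∀ m : ℕ, Real.cosh (2 ^ m * (2 * s)) ≤ Real.exp (2 ^ m * (2 * τ * y)) := by
    intro m
    refine cosh_two_pow_mul_le m (F := fun z => 2 * F z ^ 2 - 1) (by fun_prop) (τ := 2 * τ)
      (C := 2 * C ^ 2 + 1) (by positivity) (growth_two_mul_sq_sub_one hτ hgrow)
      (real_two_mul_sq_sub_one hreal) hy ?_
    · have : 2 * F (y * Complex.I) ^ 2 - 1 = -((Real.cosh (2 * s) : ℝ) : ℂ) := by
        rw [hs, Real.cosh_two_mul, Real.cosh_sq, mul_pow, Complex.I_sq]; push_cast; ring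
      rw [this]; push_cast; ring
  by_contra! hlt
  obtain ⟨m, hm⟩ := pow_unbounded_of_one_lt (1 / (2 * s - 2 * τ * y)) (one_lt_two : (1 : ℝ) < 2)
  rw [div_lt_iff₀ (by linarith)] at hm
  have h1 := h m
  have h2 : Real.exp (2 ^ m * (2 * s)) / 2 ≤ Real.cosh (2 ^ m * (2 * s)) := by
    rw [Real.cosh_eq]; linarith [Real.exp_pos (-(2 ^ m * (2 * s)))]
  have h3 : Real.exp (2 ^ m * (2 * τ * y)) * Real.exp 1 ≤ Real.exp (2 ^ m * (2 * s)) := by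
    rw [← Real.exp_add]; apply Real.exp_le_exp.2; linarith
  have h4 : 2 < Real.exp 1 := by linarith [Real.exp_one_gt_d9]
  nlinarith [Real.exp_pos (2 ^ m * (2 * τ * y))]

/-! ### Taylor series with geometrically bounded derivatives -/

lemma taylor_remainder_le (n : ℕ) : ∀ {g : ℕ → ℝ → ℝ} {R σ : ℝ},
    (∀ k t, HasDerivAt (g k) (g (k + 1) t) t) → (∀ k t, |g k t| ≤ R * σ ^ k) →
    ∀ t, 0 ≤ t → |g 0 t - ∑ k ∈ Finset.range n, g k 0 * t ^ k / (k.factorial : ℝ)|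
      ≤ R * σ ^ n * t ^ n / (n.factorial : ℝ) := by
  induction n with
  | zero => intro g R σ hg hb t ht; simpa using hb 0 t
  | succ n ih =>
    intro g R σ hg hb t ht
    have ih' := ih (g := fun k => g (k + 1)) (R := R * σ) (σ := σ) (fun k t => hg (k + 1) t)
      (fun k t => (hb (k + 1) t).trans_eq (by ring))
    have hd : ∀ x : ℝ, HasDerivAt
        (fun t => g 0 t - ∑ k ∈ Finset.range (n + 1), g k 0 * t ^ k / (k.factorial : ℝ))
        (g 1 x - ∑ k ∈ Finset.range n, g (k + 1) 0 * x ^ k / (k.factorial : ℝ)) x := by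
      intro x
      refine (hg 0 x).sub ?_
      simp_rw [Finset.sum_range_succ' _ n]
      simp only [pow_zero]
      refine HasDerivAt.add_const _ (HasDerivAt.fun_sum fun k _ => ?_)
      have := (((hasDerivAt_pow (k + 1) x).const_mul (g (k + 1) 0)).div_const
        ((k + 1).factorial : ℝ))
      refine this.congr_deriv ?_
      rw [Nat.factorial_succ]
      push_cast
      have h1 : (k.factorial : ℝ) ≠ 0 := by positivity
      have h2 : (k + 1 : ℝ) ≠ 0 := by positivity
      field_simp
    have hB : ∀ x : ℝ, HasDerivAt (fun t => R * σ ^ (n + 1) * t ^ (n + 1) / ((n + 1).factorial : ℝ))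
        (R * σ * σ ^ n * x ^ n / (n.factorial : ℝ)) x := by
      intro x
      have := (((hasDerivAt_pow (n + 1) x).const_mul (R * σ ^ (n + 1))).div_const
        ((n + 1).factorial : ℝ))
      refine this.congr_deriv ?_
      rw [Nat.factorial_succ]
      push_cast
      have h1 : (n.factorial : ℝ) ≠ 0 := by positivity
      have h2 : (n + 1 : ℝ) ≠ 0 := by positivity
      field_simp
      ring
    have := image_norm_le_of_norm_deriv_right_le_deriv_boundary (a := 0) (b := t)
      (fun x _ => (hd x).continuousAt.continuousWithinAt) (fun x _ => (hd x).hasDerivWithinAt)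
      (by simp [Finset.sum_range_succ']) hB (fun x hx => by
        have := ih' x hx.1
        simpa using this)
    exact this ⟨ht, le_rfl⟩

lemma hasSum_bound (R σ x : ℝ) :
    HasSum (fun k : ℕ => R * σ ^ k * x ^ k / (k.factorial : ℝ)) (R * Real.exp (σ * x)) := by
  have h := (NormedSpace.expSeries_div_hasSum_exp (σ * x)).mul_left R
  rw [← Real.exp_eq_exp_ℝ] at h
  refine h.congr_fun fun k => ?_
  rw [mul_pow]; ring

lemma hasSum_taylor {g : ℕ → ℝ → ℝ} {R σ : ℝ} (hg : ∀ k t, HasDerivAt (g k) (g (k + 1) t) t)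
    (hb : ∀ k t, |g k t| ≤ R * σ ^ k) (t : ℝ) :
    HasSum (fun k : ℕ => g k 0 * t ^ k / (k.factorial : ℝ)) (g 0 t) := by
  wlog ht : 0 ≤ t generalizing g t
  · have := this (g := fun k t => (-1) ^ k * g k (-t)) (fun k s => by
        have := ((hg k (-s)).scomp s (hasDerivAt_neg s)).const_mul ((-1) ^ k)
        refine this.congr_deriv ?_
        simp [pow_succ])
      (fun k s => by simpa [abs_mul] using hb k (-s)) (-t) (by linarith)
    simp only [neg_zero, pow_zero, one_mul, neg_neg] at this
    refine this.congr_fun fun k => ?_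
    rw [neg_pow t k]
    have : ((-1 : ℝ) ^ k) * (-1) ^ k = 1 := by rw [← mul_pow]; simp
    linear_combination (-(g k 0 * t ^ k / (k.factorial : ℝ))) * this
  have hsum := (hasSum_bound R σ t).summable
  have hs : Summable (fun k : ℕ => g k 0 * t ^ k / (k.factorial : ℝ)) := by
    refine Summable.of_norm_bounded hsum fun k => ?_
    rw [norm_div, norm_mul, Real.norm_eq_abs (g k 0), Real.norm_of_nonneg (by positivity),
      Real.norm_of_nonneg (by positivity)]
    gcongr
    exact hb k 0
  have h0 : Tendsto (fun n => ∑ k ∈ Finset.range n, g k 0 * t ^ k / (k.factorial : ℝ)) atTop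
      (𝓝 (g 0 t)) := by
    rw [tendsto_iff_norm_sub_tendsto_zero]
    refine squeeze_zero (fun _ => norm_nonneg _) (fun n => ?_) hsum.tendsto_atTop_zero
    rw [norm_sub_rev]
    exact taylor_remainder_le n hg hb t ht
  rw [← tendsto_nhds_unique hs.hasSum.tendsto_sum_nat h0]
  exact hs.hasSum

/-! ### Bernstein's inequality -/

/-- Bernstein's inequality for a real function `g 0` with successive derivatives `g k`. -/
lemma bernstein_real {g : ℕ → ℝ → ℝ} {R σ M : ℝ} (hσ : 0 < σ) (hM : 0 < M)
    (hg : ∀ k t, HasDerivAt (g k) (g (k + 1) t) t)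
    (hb : ∀ k t, |g k t| ≤ R * σ ^ k) (hgM : ∀ t, |g 0 t| ≤ M) : g 1 0 ≤ σ * M := by
  have hterm : ∀ (k : ℕ) (z : ℂ), ‖(g k 0 : ℂ) * z ^ k / (k.factorial : ℂ)‖
      ≤ R * σ ^ k * ‖z‖ ^ k / (k.factorial : ℝ) := by
    intro k z
    rw [norm_div, norm_mul, norm_pow, Complex.norm_real, Complex.norm_natCast]
    gcongr
    exact hb k 0
  have hR : 0 ≤ R := by simpa using (abs_nonneg _).trans (hb 0 0)
  set G : ℂ → ℂ := fun z => ∑' k : ℕ, (g k 0 : ℂ) * z ^ k / (k.factorial : ℂ) with hG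
  have hball : ∀ (ρ : ℝ) (k : ℕ) (z : ℂ), z ∈ Metric.ball (0 : ℂ) ρ →
      ‖(g k 0 : ℂ) * z ^ k / (k.factorial : ℂ)‖ ≤ R * σ ^ k * ρ ^ k / (k.factorial : ℝ) := by
    intro ρ k z hz
    have hz' : ‖z‖ ≤ ρ := by simpa using (Metric.mem_ball.1 hz).le
    refine (hterm k z).trans ?_
    gcongr
  have hGd : Differentiable ℂ G := by
    intro z
    have := Complex.differentiableOn_tsum_of_summable_norm
      (F := fun (k : ℕ) (z : ℂ) => (g k 0 : ℂ) * z ^ k / (k.factorial : ℂ))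
      (hasSum_bound R σ (‖z‖ + 1)).summable (fun k => by fun_prop) Metric.isOpen_ball
      (hball (‖z‖ + 1))
    exact (this z (by simp)).differentiableAt (Metric.isOpen_ball.mem_nhds (by simp))
  have hG0 : HasDerivAt G (g 1 0 : ℂ) 0 := by
    have h1 := Complex.hasSum_deriv_of_summable_norm
      (F := fun (k : ℕ) (z : ℂ) => (g k 0 : ℂ) * z ^ k / (k.factorial : ℂ)) (z := 0)
      (hasSum_bound R σ 1).summable (fun k => by fun_prop) Metric.isOpen_ball
      (hball 1) (by simp)
    have h2 : ∀ k : ℕ, deriv (fun z : ℂ => (g k 0 : ℂ) * z ^ k / (k.factorial : ℂ)) 0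
        = (g k 0 : ℂ) * (k * 0 ^ (k - 1)) / (k.factorial : ℂ) := fun k =>
      (((hasDerivAt_pow k (0 : ℂ)).const_mul (g k 0 : ℂ)).div_const _).deriv
    simp_rw [h2] at h1
    have h3 := hasSum_single (f := fun k : ℕ =>
      (g k 0 : ℂ) * (k * 0 ^ (k - 1)) / (k.factorial : ℂ)) 1 (fun k hk => by
        rcases k with _ | _ | k
        · simp
        · exact absurd rfl hk
        · simp)
    have h4 : deriv G 0 = (g 1 0 : ℂ) := by
      rw [hG, h1.unique h3]; simp
    rw [← h4]
    exact (hGd 0).hasDerivAt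
  have hGreal : ∀ x : ℝ, G x = g 0 x := by
    intro x
    have h := (hasSum_taylor hg hb x).mapL Complex.ofRealCLM
    rw [hG]
    refine Eq.trans (tsum_congr fun k => ?_) h.tsum_eq
    simp
  have hGgrow : ∀ z, ‖G z‖ ≤ R * Real.exp (σ * ‖z‖) := fun z =>
    tsum_of_norm_bounded (hasSum_bound R σ ‖z‖) (fun k => hterm k z)
  have hGconj : ∀ z, G ((starRingEnd ℂ) z) = (starRingEnd ℂ) (G z) := by
    intro z
    rw [hG]
    simp only [Complex.conj_tsum]
    congr 1
    funext k
    simp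
  have hle : ∀ y : ℝ, 0 ≤ y → (G (y * Complex.I)).im ≤ M * Real.sinh (σ * y) := by
    intro y hy
    have h := le_of_imag_axis_eq_sinh (F := fun z => (G z - G (-z)) / (2 * M)) (τ := σ)
      (C := R / M) (s := Real.arsinh ((G (y * Complex.I)).im / M)) (y := y)
      ((hGd.sub (hGd.comp differentiable_neg)).div_const _) hσ.le ?_ ?_ hy ?_
    · have h2 := Real.sinh_le_sinh.2 h
      rw [Real.sinh_arsinh, div_le_iff₀ hM] at h2
      linarith
    · intro z
      have h1 := hGgrow z
      have h2 := hGgrow (-z)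
      rw [norm_neg] at h2
      have h3 := norm_sub_le (G z) (G (-z))
      rw [norm_div, norm_mul, Complex.norm_real, Real.norm_of_nonneg hM.le,
        div_le_iff₀ (by simpa using hM)]
      have : R / M * Real.exp (σ * ‖z‖) * (‖(2 : ℂ)‖ * M) = 2 * (R * Real.exp (σ * ‖z‖)) := by
        simp; field_simp
      rw [this]
      linarith
    · intro x
      refine ⟨(g 0 x - g 0 (-x)) / (2 * M), ?_, ?_⟩
      · rw [abs_div, abs_of_pos (by positivity : 0 < 2 * M), div_le_one (by positivity)]
        have := abs_sub (g 0 x) (g 0 (-x))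
        linarith [hgM x, hgM (-x)]
      · have := hGreal (-x)
        push_cast at this ⊢
        rw [hGreal, this]
    · have h1 : -((y : ℂ) * Complex.I) = (starRingEnd ℂ) (y * Complex.I) := by simp
      have hM' : (M : ℂ) ≠ 0 := by exact_mod_cast hM.ne'
      simp only [Real.sinh_arsinh]
      rw [h1, hGconj, Complex.sub_conj]
      push_cast
      field_simp
  -- `M sinh (σ y) - Im G(iy)` vanishes at `0` and is nonnegative to the right of it.
  have hd1 : HasDerivAt (fun y : ℝ => G (y * Complex.I)) ((g 1 0 : ℂ) * Complex.I) 0 := by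
    have h1 : HasDerivAt (fun y : ℝ => (y : ℂ) * Complex.I) Complex.I 0 := by
      simpa using (Complex.ofRealCLM.hasDerivAt (x := (0 : ℝ))).mul_const Complex.I
    have h2 : HasDerivAt G (g 1 0 : ℂ) (((0 : ℝ) : ℂ) * Complex.I) := by simpa using hG0
    exact h2.comp (0 : ℝ) h1
  have hd2 : HasDerivAt (fun y : ℝ => (G (y * Complex.I)).im) (g 1 0) 0 := by
    have := Complex.imCLM.hasFDerivAt.comp_hasDerivAt (0 : ℝ) hd1
    simpa [Function.comp_def] using this
  have hd3 : HasDerivAt (fun y : ℝ => M * Real.sinh (σ * y)) (σ * M) 0 := by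
    have := ((hasDerivAt_id (0 : ℝ)).const_mul σ).sinh.const_mul M
    simpa [mul_comm] using this
  have hd4 := (hd3.sub hd2).hasDerivWithinAt (s := Set.Ioi 0)
  rw [hasDerivWithinAt_iff_tendsto_slope' (by simp)] at hd4
  have h0 : (G 0).im = 0 := by
    have := hGreal 0
    simp only [Complex.ofReal_zero] at this
    rw [this]; simp
  have := ge_of_tendsto (b := 0) hd4 (by
    filter_upwards [self_mem_nhdsWithin] with y hy
    have hy' : 0 < y := hy
    simp only [slope, vsub_eq_sub, Pi.sub_apply, smul_eq_mul, sub_zero, Complex.ofReal_zero,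
      zero_mul, h0, mul_zero, Real.sinh_zero]
    have := hle y hy'.le
    exact mul_nonneg (by positivity) (by linarith))
  linarith

section Abstract

variable {E : Type*} [NormedAddCommGroup E] [NormedSpace ℂ E]

lemma GenDeriv.hasDerivAt {T : ℝ → E →L[ℂ] E} (hadd : ∀ s t x, T (s + t) x = T s (T t x))
    {x y : E} (h : GenDeriv T x y) (t : ℝ) : HasDerivAt (fun s => T s x) (T t y) t := by
  rw [hasDerivAt_iff_tendsto_slope_zero]
  have := ((T t).continuous.tendsto y).comp h
  refine this.congr fun s => ?_
  simp only [Function.comp_apply]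
  rw [hadd, ← map_sub]
  exact ((T t).restrictScalars ℝ).map_smul s⁻¹ _

/-- Bernstein's inequality for the generator of a one-parameter group of isometries. -/
lemma bernstein_operator {T : ℝ → E →L[ℂ] E} (hadd : ∀ s t x, T (s + t) x = T s (T t x))
    (hzero : ∀ x, T 0 x = x) (hnorm : ∀ t x, ‖T t x‖ = ‖x‖) {h : ℕ → E}
    (hh : ∀ k, GenDeriv T (h k) (h (k + 1))) {R σ : ℝ} (hσ : 0 < σ)
    (hb : ∀ k, ‖h k‖ ≤ R * σ ^ k) : ‖h 1‖ ≤ σ * ‖h 0‖ := by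
  obtain ⟨φ, hφ, hφ1⟩ := exists_dual_vector'' ℂ (h 1)
  have hle : ∀ t x, |(φ (T t x)).re| ≤ ‖x‖ := fun t x =>
    (Complex.abs_re_le_norm _).trans (((φ.le_opNorm _).trans
      (mul_le_of_le_one_left (norm_nonneg _) hφ)).trans_eq (hnorm t x))
  refine le_of_forall_pos_le_add fun ε hε => ?_
  have := bernstein_real (g := fun k t => (φ (T t (h k))).re) (R := R) (M := ‖h 0‖ + ε / σ)
    hσ (by positivity) (fun k t => ?_) (fun k t => (hle t _).trans (hb k))
    (fun t => (hle t _).trans (by linarith [div_pos hε hσ]))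
  · rw [hzero, hφ1] at this
    calc ‖h 1‖ ≤ σ * (‖h 0‖ + ε / σ) := by simpa using this
      _ = _ := by field_simp
  · exact (Complex.reCLM.comp (φ.restrictScalars ℝ)).hasFDerivAt.comp_hasDerivAt t
      ((hh k).hasDerivAt hadd t)

lemma IsIterDeriv.unique {n : ℕ} {U : Fin n → ℝ → E →L[ℂ] E} {f : E} :
    ∀ {L : List (Fin n)} {g g' : E}, IsIterDeriv U L f g → IsIterDeriv U L f g' → g = g'
  | [], _, _, h, h' => h.trans h'.symm
  | _ :: _, _, _, ⟨_, h1, h2⟩, ⟨_, h1', h2'⟩ => by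
    obtain rfl := IsIterDeriv.unique h1 h1'
    exact tendsto_nhds_unique h2 h2'

/-- The groups need not commute: applying Bernstein's inequality to `Θ_L f` in the direction `j`
bounds `Θ_j Θ_L f`, so induction on `L` improves a uniform bound `R σ^{|L|}` on all
iterated derivatives to `σ^{|L|} ‖f‖`. -/
lemma norm_iterDeriv_le {n : ℕ} {U : Fin n → ℝ → E →L[ℂ] E}
    (hadd : ∀ j s t x, U j (s + t) x = U j s (U j t x)) (hzero : ∀ j x, U j 0 x = x)
    (hnorm : ∀ j t x, ‖U j t x‖ = ‖x‖) {f : E} (hf : ∀ L : List (Fin n), ∃ g, IsIterDeriv U L f g)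
    {R σ : ℝ} (hσ : 0 < σ) (hR : ∀ L g, IsIterDeriv U L f g → ‖g‖ ≤ R * σ ^ L.length) :
    ∀ L g, IsIterDeriv U L f g → ‖g‖ ≤ σ ^ L.length * ‖f‖ := by
  intro L
  induction L with
  | nil => intro g hg; simp [show g = f from hg]
  | cons j L ih =>
    choose v hv using hf
    have hstep : ∀ L : List (Fin n), GenDeriv (U j) (v L) (v (j :: L)) := by
      intro L
      obtain ⟨h, h1, h2⟩ := hv (j :: L)
      rwa [h1.unique (hv L)] at h2
    intro g hg
    have := bernstein_operator (hadd j) (hzero j) (hnorm j)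
      (h := fun k => v (List.replicate k j ++ L)) (R := R * σ ^ L.length)
      (fun k => by simpa [List.replicate_succ] using hstep (List.replicate k j ++ L)) hσ
      (fun k => (hR _ _ (hv _)).trans_eq (by rw [List.length_append, List.length_replicate]; ring))
    rw [hg.unique (hv (j :: L))]
    calc ‖v (j :: L)‖ ≤ σ * ‖v L‖ := by simpa using this
      _ ≤ σ * (σ ^ L.length * ‖f‖) := by gcongr; exact ih _ (hv L)
      _ = _ := by rw [List.length_cons]; ring

end Abstract

/-! ### The Mellin translation groups -/

lemma measurable_mellinDilate {n : ℕ} (j : Fin n) (t : ℝ) :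
    Measurable (mellinDilate (n := n) j t) := by
  unfold mellinDilate
  fun_prop

lemma map_mellinDilate_volume {n : ℕ} (j : Fin n) (t : ℝ) :
    (volume : Measure (Fin n → ℝ)) =
      ENNReal.ofReal (Real.exp t) • Measure.map (mellinDilate j t) volume := by
  have hdet : (Matrix.diagonal (Function.update (1 : Fin n → ℝ) j (Real.exp t))).det
      = Real.exp t := by
    rw [Matrix.det_diagonal, Finset.prod_update_of_mem (Finset.mem_univ j)]
    simp
  have h := Real.smul_map_diagonal_volume_pi
    (D := Function.update (1 : Fin n → ℝ) j (Real.exp t)) (by rw [hdet]; positivity)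
  rw [hdet, Real.abs_exp] at h
  have hfun : ⇑(Matrix.toLin' (Matrix.diagonal (Function.update (1 : Fin n → ℝ) j (Real.exp t))))
      = mellinDilate j t := by
    ext x i
    rw [Matrix.toLin'_apply, Matrix.mulVec_diagonal]
    by_cases hi : i = j
    · subst hi; simp [mellinDilate]
    · simp [mellinDilate, hi]
  rw [hfun] at h
  exact h.symm

lemma measurePreserving_mellinDilate {n : ℕ} (j : Fin n) (t : ℝ) :
    MeasurePreserving (mellinDilate j t) (mellinMeasure n) (mellinMeasure n) := by
  refine ⟨measurable_mellinDilate j t, ?_⟩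
  set P : Set (Fin n → ℝ) := {x | ∀ i, 0 < x i}
  set ρ : (Fin n → ℝ) → ℝ≥0∞ := fun x => ∏ i, ENNReal.ofReal (x i)⁻¹
  have hP : MeasurableSet P := by
    have : P = ⋂ i, {x | 0 < x i} := by ext; simp [P]
    rw [this]
    exact MeasurableSet.iInter fun i => measurableSet_lt measurable_const (measurable_pi_apply i)
  have hρ : Measurable ρ := by
    refine Finset.measurable_prod _ fun i _ => ?_
    exact ENNReal.measurable_ofReal.comp (measurable_pi_apply i).inv
  have hPT : ∀ x, mellinDilate j t x ∈ P ↔ x ∈ P := by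
    intro x
    refine forall_congr' fun i => ?_
    by_cases hi : i = j
    · subst hi; simp [mellinDilate, Real.exp_pos]
    · simp [mellinDilate, hi]
  have hρT : ∀ x, ENNReal.ofReal (Real.exp t) * ρ (mellinDilate j t x) = ρ x := by
    intro x
    simp only [ρ]
    rw [← Finset.mul_prod_erase _ _ (Finset.mem_univ j),
      ← Finset.mul_prod_erase _ _ (Finset.mem_univ j), ← mul_assoc]
    congr 1
    · rw [← ENNReal.ofReal_mul (Real.exp_pos t).le]
      congr 1
      simp only [mellinDilate, Function.update_self]
      rw [mul_inv, ← mul_assoc, mul_inv_cancel₀ (Real.exp_ne_zero t), one_mul]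
    · refine Finset.prod_congr rfl fun i hi => ?_
      simp [mellinDilate, Finset.ne_of_mem_erase hi]
  have hμ : ∀ s, MeasurableSet s → mellinMeasure n s = ∫⁻ x, (s ∩ P).indicator ρ x := by
    intro s hs
    rw [lintegral_indicator (hs.inter hP), mellinMeasure, withDensity_apply _ hs,
      Measure.restrict_restrict hs]
  ext s hs
  have hT := measurable_mellinDilate j t
  rw [Measure.map_apply hT hs, hμ _ (hT hs), hμ _ hs]
  conv_rhs => rw [map_mellinDilate_volume j t]
  rw [lintegral_smul_measure, lintegral_map (hρ.indicator (hs.inter hP)) hT, smul_eq_mul,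
    ← lintegral_const_mul' _ _ ENNReal.ofReal_ne_top]
  refine lintegral_congr fun x => ?_
  by_cases hx : x ∈ mellinDilate j t ⁻¹' s ∩ P
  · have hx' : mellinDilate j t x ∈ s ∩ P := ⟨hx.1, (hPT x).2 hx.2⟩
    rw [Set.indicator_of_mem hx, Set.indicator_of_mem hx', hρT]
  · rw [Set.indicator_of_notMem hx, Set.indicator_of_notMem, mul_zero]
    exact fun h => hx ⟨h.1, (hPT x).1 h.2⟩

section Translation

variable {n : ℕ} {p : ℝ≥0∞} [Fact (1 ≤ p)]
  {U : Fin n → ℝ → (Lp ℂ p (mellinMeasure n) →L[ℂ] Lp ℂ p (mellinMeasure n))}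

lemma IsMellinTranslation.norm_eq (hU : IsMellinTranslation p U) (j : Fin n) (t : ℝ)
    (f : Lp ℂ p (mellinMeasure n)) : ‖U j t f‖ = ‖f‖ := by
  rw [Lp.norm_def, Lp.norm_def, eLpNorm_congr_ae (hU j t f)]
  congr 1
  exact eLpNorm_comp_measurePreserving (Lp.aestronglyMeasurable f)
    (measurePreserving_mellinDilate j t)

lemma IsMellinTranslation.apply_zero (hU : IsMellinTranslation p U) (j : Fin n)
    (f : Lp ℂ p (mellinMeasure n)) : U j 0 f = f := by
  refine Lp.ext ?_
  filter_upwards [hU j 0 f] with x hx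
  rw [hx]
  simp [mellinDilate]

lemma IsMellinTranslation.apply_add (hU : IsMellinTranslation p U) (j : Fin n) (s t : ℝ)
    (f : Lp ℂ p (mellinMeasure n)) : U j (s + t) f = U j s (U j t f) := by
  refine Lp.ext ?_
  filter_upwards [hU j (s + t) f, hU j s (U j t f),
    (measurePreserving_mellinDilate j s).quasiMeasurePreserving.ae (hU j t f)] with x h1 h2 h3
  rw [h1, h2, h3]
  congr 1
  simp only [mellinDilate, Function.update_self, Function.update_idem]
  rw [← mul_assoc, ← Real.exp_add, add_comm]

end Translation

/-- A function `f ∈ D^∞` belongs to the Bernstein–Mellin space `B^p_σ(Θ₁,…,Θₙ)`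
iff `R(f,σ) = sup σ^{-(l₁+⋯+l_k)} ‖Θ_{j₁}^{l₁}⋯Θ_{j_k}^{l_k} f‖` (the supremum being over
all iterated Mellin derivatives, encoded by lists of indices) is finite. -/
theorem bernstein_mellin_criterion {n : ℕ} (p : ℝ≥0∞) [Fact (1 ≤ p)] (hp : p ≠ ∞)
    (U : Fin n → ℝ → (Lp ℂ p (mellinMeasure n) →L[ℂ] Lp ℂ p (mellinMeasure n)))
    (hU : IsMellinTranslation p U)
    (σ : ℝ) (hσ : 0 < σ) (f : Lp ℂ p (mellinMeasure n))
    (hf : ∀ L : List (Fin n), ∃ g, IsIterDeriv U L f g) :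
    (∀ (L : List (Fin n)) (g : Lp ℂ p (mellinMeasure n)),
        IsIterDeriv U L f g → ‖g‖ ≤ σ ^ L.length * ‖f‖) ↔
      ∃ R : ℝ, ∀ (L : List (Fin n)) (g : Lp ℂ p (mellinMeasure n)),
        IsIterDeriv U L f g → σ⁻¹ ^ L.length * ‖g‖ ≤ R := by
  constructor
  · intro h
    refine ⟨‖f‖, fun L g hg => ?_⟩
    rw [inv_pow, inv_mul_le_iff₀ (by positivity)]
    exact h L g hg
  · rintro ⟨R, hR⟩
    refine norm_iterDeriv_le hU.apply_add hU.apply_zero hU.norm_eq hf hσ (R := R) fun L g hg => ?_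
    have := hR L g hg
    rw [inv_pow, inv_mul_le_iff₀ (by positivity)] at this
    linarith
end
end

section
/- Let D be the infinitesimal generator of a strongly continuous one-parameter group of isometries of a complex Banach space B. If f ∈ B_σ(D) for some 0 < σ < ∞, then the limit d_f = lim_{k→∞} ‖D^k f‖^{1/k} exists, f ∈ B_{d_f}(D), and d_f equals σ_f, the smallest σ for which f ∈ B_σ(D). Conversely, if f ∈ D^∞(D) and d_f = lim_{k→∞} ‖D^k f‖^{1/k} exists and is finite, then f ∈ B_{d_f}(D) and d_f = σ_f. -/
/-!
Write `D^k f` for `c k`. The core is `norm_chain_le_of_frequently`: if `r > 0` and `‖D^n f‖ ≤ r ^ n`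
for infinitely many `n`, then `‖D^k f‖ ≤ r ^ k ‖f‖` for all `k`. Given this, the theorem is elementary
real analysis (`tendsto_root_sInf`). Let `d` be the infimum of the admissible constants. Then
`‖D^k f‖ ^ (1/k) ≤ d (‖f‖ + 1) ^ (1/k)`, and the roots cannot fall below some `ρ < d` infinitely often,
since then constants below `d` would be admissible. If the limit is assumed to exist and equals
`d`, then `d + 1` is admissible, and uniqueness of limits gives the claim.

The core is proved in two steps.

* Exponential growth (`exists_norm_chain_le`). For a group of isometries
  `|Re z| ‖u‖ ≤ ‖z u - D u‖`. Apply this to `P z = ∑ i < n, z ^ (n-1-i) D^i f`, for which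
  `z P z - D (P z) = z ^ n f - D^n f`. On the circle `|z| = r` one has `|z ^ 2 + r ^ 2| = 2 r |Re z|`,
  so `(z ^ 2 + r ^ 2) P z` is bounded there, and Cauchy's estimates give
  `‖D^(k+2) f + r ^ 2 D^k f‖ ≤ 2 (‖f‖ + 1) r ^ (k+2)` for `k + 2 < n`. Comparing two radii `r < s`
  yields `‖D^k f‖ ≤ C s ^ k`.

* Bernstein's inequality (`IsBoundedJet.bernstein`), applied to the orbits `t ↦ T(t) D^k f`, removes
  the constant `C`; then `s` decreases to `r`. After rescaling, the type is below `π / 2` and the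
  claim is `‖g'(0)‖ ≤ (π / 2) sup ‖g‖`. The function `Q t = (g t - g 0 - t g'(0)) / t ^ 2` is again of
  this type and vanishes at `±∞`. The Taylor series of `1 / cosh` has radius `π / 2`, hence
  `Q t = (H (t + 1) + H (t - 1)) / 2` with `H = sech(D) Q` vanishing at `±∞`, and
  `∑ (-1) ^ k (Q (2k+1) - Q (-(2k+1)))` telescopes to `0`. This is M. Riesz's interpolation formula;
  the inequality follows from `∑ (-1) ^ k / (2k+1) = π / 4` and `∑ 1 / (2k+1) ^ 2 = π ^ 2 / 8`.
-/

open MeasureTheory Filter Topology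

noncomputable section

/-- The Favard constants `K_j = (4/π) Σ_{r≥0} (-1)^{r(j+1)}/(2r+1)^{j+1}`. -/
def favard (j : ℕ) : ℝ :=
  (4 / Real.pi) * ∑' r : ℕ, (-1 : ℝ) ^ (r * (j + 1)) / (2 * (r : ℝ) + 1) ^ (j + 1)

/-! ### Power series of `cosh` and its reciprocal -/

/-- The Taylor coefficients of `cosh` at `0`: `1 / m!` for even `m`, and `0` for odd `m`. -/
def coshCoeff (m : ℕ) : ℝ := (1 + (-1) ^ m) / 2 / (m.factorial : ℝ)

lemma iteratedDeriv_cosh_zero (m : ℕ) :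
    iteratedDeriv m Complex.cosh 0 = ((1 + (-1) ^ m) / 2 : ℂ) := by
  have h : Complex.cosh = fun z => (1/2 : ℂ) * (Complex.exp (1 * z) + Complex.exp ((-1) * z)) := by
    funext z
    simp [Complex.cosh]
    ring
  have h1 : ∀ c : ℂ, ContDiffAt ℂ (m : ℕ∞) (fun z => Complex.exp (c * z)) 0 := fun c => by
    fun_prop
  rw [h, iteratedDeriv_const_mul _ ((h1 1).add (h1 (-1))), iteratedDeriv_fun_add (h1 1) (h1 (-1)),
    iteratedDeriv_cexp_const_mul, iteratedDeriv_cexp_const_mul]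
  simp
  ring

lemma cosh_ne_zero_of_norm_lt {z : ℂ} (hz : ‖z‖ < Real.pi / 2) : Complex.cosh z ≠ 0 := by
  intro h
  rw [← Complex.cos_mul_I, Complex.cos_eq_zero_iff] at h
  obtain ⟨k, hk⟩ := h
  have h1 : ‖z‖ = |2 * (k : ℝ) + 1| * (Real.pi / 2) := by
    have : ‖z * Complex.I‖ = ‖z‖ := by simp
    rw [← this, hk]
    have e : ((2 * k + 1) * Real.pi / 2 : ℂ) = (((2 * (k : ℝ) + 1) * (Real.pi / 2) : ℝ) : ℂ) := by
      push_cast; ring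
    rw [e, Complex.norm_real, Real.norm_eq_abs, abs_mul, abs_of_pos (by positivity : 0 < Real.pi / 2)]
  have h2 : (1 : ℝ) ≤ |2 * (k : ℝ) + 1| := by
    have : (1 : ℤ) ≤ |2 * k + 1| := Int.one_le_abs (by omega)
    exact_mod_cast this
  nlinarith [Real.pi_pos]

/-- Existence of the Taylor coefficients of `1 / cosh` at `0`. The series converges absolutely
inside the disc of radius `π / 2`, where `cosh` has no zero, and its Cauchy product with the series
of `cosh` is `1`. -/
lemma exists_sech_coeff : ∃ a : ℕ → ℝ,
    (∀ r : ℝ, 0 ≤ r → r < Real.pi / 2 → Summable fun n => |a n| * r ^ n) ∧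
    ∀ n, ∑ p ∈ Finset.HasAntidiagonal.antidiagonal n, a p.1 * coshCoeff p.2 = if n = 0 then 1 else 0 := by
  set F : ℂ → ℂ := fun z => (Complex.cosh z)⁻¹ with hF
  have hd : DifferentiableOn ℂ F (Metric.ball 0 (Real.pi / 2)) := by
    intro z hz
    have : ‖z‖ < Real.pi / 2 := by simpa using hz
    exact (Complex.differentiable_cosh z).differentiableWithinAt.inv
      (cosh_ne_zero_of_norm_lt this)
  have hball : Metric.ball (0 : ℂ) (Real.pi / 2) ∈ 𝓝 (0 : ℂ) :=
    Metric.ball_mem_nhds _ (by positivity)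
  have hFa : AnalyticAt ℂ F 0 := hd.analyticAt hball
  have hCa : AnalyticAt ℂ Complex.cosh 0 := Complex.differentiable_cosh.analyticAt 0
  refine ⟨fun n => ((n.factorial : ℂ)⁻¹ * iteratedDeriv n F 0).re, fun r hr0 hr => ?_, fun n => ?_⟩
  · have hs := (Complex.hasSum_taylorSeries_on_ball hd (z := (r : ℂ))
      (by simpa [abs_of_nonneg hr0] using hr)).summable.norm
    refine Summable.of_nonneg_of_le (fun n => by positivity) (fun n => ?_) hs
    have h1 := Complex.abs_re_le_norm ((n.factorial : ℂ)⁻¹ * iteratedDeriv n F 0)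
    calc _ ≤ ‖(n.factorial : ℂ)⁻¹ * iteratedDeriv n F 0‖ * r ^ n := by gcongr
      _ = _ := by
        simp [abs_of_nonneg hr0]
        ring
  · have hev : (fun z => F z * Complex.cosh z) =ᶠ[𝓝 0] fun _ => (1 : ℂ) := by
      filter_upwards [hball] with z hz
      exact inv_mul_cancel₀ (cosh_ne_zero_of_norm_lt (by simpa using hz))
    have h1 := hev.iteratedDeriv_eq n
    rw [iteratedDeriv_fun_mul hFa.contDiffAt hCa.contDiffAt] at h1
    have h2 : (∑ p ∈ Finset.HasAntidiagonal.antidiagonal n,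
        ((p.1.factorial : ℂ)⁻¹ * iteratedDeriv p.1 F 0) * (coshCoeff p.2 : ℂ))
        = if n = 0 then 1 else 0 := by
      rw [Finset.Nat.sum_antidiagonal_eq_sum_range_succ_mk]
      have h3 : iteratedDeriv n (fun _ : ℂ => (1 : ℂ)) 0 = if n = 0 then 1 else 0 := by
        simp [iteratedDeriv_const]
      rw [h3] at h1
      have h4 : (if n = 0 then 1 else 0 : ℂ) = (n.factorial : ℂ)⁻¹ * (if n = 0 then 1 else 0) := by
        split_ifs with h <;> simp [h]
      rw [h4, ← h1, Finset.mul_sum]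
      refine Finset.sum_congr rfl fun i hi => ?_
      have hi' : i ≤ n := by simpa [Nat.lt_succ_iff] using hi
      rw [iteratedDeriv_cosh_zero, Nat.cast_choose ℂ hi', coshCoeff]
      have := Nat.factorial_ne_zero n
      have := Nat.factorial_ne_zero i
      have := Nat.factorial_ne_zero (n - i)
      push_cast
      field_simp
    have h5 := congrArg Complex.re h2
    rw [Complex.re_sum] at h5
    simp only [Complex.re_mul_ofReal] at h5
    rw [h5]
    split_ifs <;> simp

lemma abs_coshCoeff_le (m : ℕ) : |coshCoeff m| ≤ 1 / (m.factorial : ℝ) := by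
  unfold coshCoeff
  rw [abs_div, abs_of_nonneg (by positivity : (0 : ℝ) ≤ m.factorial)]
  gcongr
  rcases Nat.even_or_odd m with h | h <;> simp [h]

/-- `sech(D) (cosh(D) v) = v` for a formal derivation `D` with `D^j v = v j` and
`cosh(D) (v j) = u j`: as the derivatives grow like `σ ^ j` and the `sech` series converges
absolutely at `σ`, the double series can be summed along antidiagonals. -/
lemma hasSum_sech_smul {E : Type*} [NormedAddCommGroup E] [NormedSpace ℝ E] [CompleteSpace E]
    {a : ℕ → ℝ} {v u : ℕ → E} {C σ : ℝ} (hσ : 0 ≤ σ)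
    (ha : Summable fun n => |a n| * σ ^ n)
    (hconv : ∀ n, ∑ p ∈ Finset.HasAntidiagonal.antidiagonal n, a p.1 * coshCoeff p.2 = if n = 0 then 1 else 0)
    (hv : ∀ j, ‖v j‖ ≤ C * σ ^ j)
    (hu : ∀ j, HasSum (fun m => coshCoeff m • v (j + m)) (u j)) :
    HasSum (fun j => a j • u j) (v 0) := by
  have hC : 0 ≤ C := by simpa using (norm_nonneg _).trans (hv 0)
  have hexp : Summable fun m : ℕ => C * (σ ^ m / (m.factorial : ℝ)) :=
    (Real.summable_pow_div_factorial σ).mul_left C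
  have hsum : Summable fun p : ℕ × ℕ => (a p.1 * coshCoeff p.2) • v (p.1 + p.2) := by
    refine Summable.of_norm_bounded (ha.mul_of_nonneg hexp (fun n => by positivity)
      (fun n => by positivity)) fun p => ?_
    rw [norm_smul, norm_mul, Real.norm_eq_abs, Real.norm_eq_abs]
    calc _ ≤ |a p.1| * (1 / (p.2.factorial : ℝ)) * (C * σ ^ (p.1 + p.2)) := by
          gcongr
          · exact abs_coshCoeff_le _
          · exact hv _
      _ = _ := by rw [pow_add]; ring
  have h1 : HasSum (fun j => a j • u j) (∑' p : ℕ × ℕ, (a p.1 * coshCoeff p.2) • v (p.1 + p.2)) := by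
    refine hsum.hasSum.prod_fiberwise fun j => ?_
    simpa [mul_smul] using (hu j).const_smul (a j)
  have h2 : HasSum (fun n => ∑ p ∈ Finset.HasAntidiagonal.antidiagonal n, (a p.1 * coshCoeff p.2) • v (p.1 + p.2))
      (∑' p : ℕ × ℕ, (a p.1 * coshCoeff p.2) • v (p.1 + p.2)) := by
    have := (Finset.HasAntidiagonal.sigmaAntidiagonalEquivProd (A := ℕ)).hasSum_iff.2 hsum.hasSum
    refine this.sigma fun n => ?_
    rw [← Finset.sum_coe_sort]
    exact hasSum_fintype _
  have h3 : (fun n => ∑ p ∈ Finset.HasAntidiagonal.antidiagonal n, (a p.1 * coshCoeff p.2) • v (p.1 + p.2))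
      = fun n => if n = 0 then v 0 else 0 := by
    funext n
    have : ∀ p ∈ Finset.HasAntidiagonal.antidiagonal n, (a p.1 * coshCoeff p.2) • v (p.1 + p.2)
        = (a p.1 * coshCoeff p.2) • v n := fun p hp => by
      rw [Finset.HasAntidiagonal.mem_antidiagonal.1 hp]
    rw [Finset.sum_congr rfl this, ← Finset.sum_smul, hconv]
    split_ifs with h <;> simp [h]
  rw [h3] at h2
  rw [← h2.unique (hasSum_ite_eq 0 (v 0))]
  exact h1

/-! ### Bounded vector-valued functions of exponential type -/

section Jet

variable {E : Type*} [NormedAddCommGroup E] [NormedSpace ℝ E]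

/-- `g j` is the `j`-th derivative of `g 0 : ℝ → E`, bounded by `C * σ ^ j`. This is the real-variable
form of a bounded function of exponential type at most `σ` with values in `E`; the whole sequence of
derivatives is part of the data. -/
structure IsBoundedJet (g : ℕ → ℝ → E) (C σ : ℝ) : Prop where
  deriv : ∀ j t, HasDerivAt (g j) (g (j + 1) t) t
  bound : ∀ j t, ‖g j t‖ ≤ C * σ ^ j

lemma IsBoundedJet.continuous {g : ℕ → ℝ → E} {C σ : ℝ} (h : IsBoundedJet g C σ) (j : ℕ) :
    Continuous (g j) :=
  continuous_iff_continuousAt.2 fun t => (h.deriv j t).continuousAt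

lemma IsBoundedJet.const_nonneg {g : ℕ → ℝ → E} {C σ : ℝ} (h : IsBoundedJet g C σ) : 0 ≤ C := by
  simpa using (norm_nonneg _).trans (h.bound 0 0)

lemma IsBoundedJet.comp_mul {g : ℕ → ℝ → E} {C σ : ℝ} (h : IsBoundedJet g C σ) (l : ℝ) :
    IsBoundedJet (fun j t => l ^ j • g j (l * t)) C (|l| * σ) where
  deriv j t := by
    have h1 : HasDerivAt (fun t : ℝ => l * t) l t := by
      simpa using (hasDerivAt_id t).const_mul l
    have := ((h.deriv j (l * t)).scomp t h1).const_smul (l ^ j)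
    exact this.congr_deriv (by rw [smul_smul, pow_succ])
  bound j t := by
    rw [norm_smul, norm_pow, Real.norm_eq_abs, mul_pow]
    calc _ ≤ |l| ^ j * (C * σ ^ j) := by
          gcongr
          exact h.bound j _
      _ = _ := by ring

lemma IsBoundedJet.comp_add {g : ℕ → ℝ → E} {C σ : ℝ} (h : IsBoundedJet g C σ) (x : ℝ) :
    IsBoundedJet (fun j t => g j (x + t)) C σ where
  deriv j t := (h.deriv j (x + t)).comp_const_add x t
  bound j _ := h.bound j _

lemma IsBoundedJet.shift {g : ℕ → ℝ → E} {C σ : ℝ} (h : IsBoundedJet g C σ) (i : ℕ) :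
    IsBoundedJet (fun j t => g (j + i) t) (C * σ ^ i) σ where
  deriv j t := by
    have := h.deriv (j + i) t
    rwa [show j + i + 1 = j + 1 + i by ring] at this
  bound j t := (h.bound _ t).trans_eq (by ring)

/-- Taylor's formula with remainder bound, by induction on the order: the derivative of the
remainder of order `n + 1` is the remainder of order `n` of the derivative, so the mean value
inequality applies. -/
lemma IsBoundedJet.remainder {g : ℕ → ℝ → E} {C σ : ℝ} (h : IsBoundedJet g C σ) (n : ℕ) :
    ∀ (j : ℕ) {s : ℝ}, 0 ≤ s →
      ‖g j s - ∑ m ∈ Finset.range n, (s ^ m / (m.factorial : ℝ)) • g (j + m) 0‖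
        ≤ C * σ ^ (j + n) * (s ^ n / (n.factorial : ℝ)) := by
  induction n with
  | zero => intro j s hs; simpa using h.bound j s
  | succ n ih =>
    intro j s hs
    have hd : ∀ t : ℝ, HasDerivAt
        (fun t => g j t - ∑ m ∈ Finset.range (n + 1), (t ^ m / (m.factorial : ℝ)) • g (j + m) 0)
        (g (j + 1) t - ∑ m ∈ Finset.range n, (t ^ m / (m.factorial : ℝ)) • g (j + 1 + m) 0) t := by
      intro t
      refine (h.deriv j t).sub ?_
      have h1 : (fun t : ℝ => ∑ m ∈ Finset.range (n + 1), (t ^ m / (m.factorial : ℝ)) • g (j + m) 0)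
          = fun t => (∑ m ∈ Finset.range n,
            (t ^ (m + 1) / ((m + 1).factorial : ℝ)) • g (j + 1 + m) 0) + g j 0 := by
        funext t
        rw [Finset.sum_range_succ']
        simp [add_comm, add_left_comm]
      rw [h1]
      refine HasDerivAt.add_const _ (HasDerivAt.fun_sum fun m _ => ?_)
      have h2 : HasDerivAt (fun t : ℝ => t ^ (m + 1) / ((m + 1).factorial : ℝ))
          (t ^ m / (m.factorial : ℝ)) t := by
        have := (hasDerivAt_pow (m + 1) t).div_const ((m + 1).factorial : ℝ)
        refine this.congr_deriv ?_
        rw [Nat.factorial_succ]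
        have := Nat.factorial_ne_zero m
        push_cast
        field_simp
      exact h2.smul_const _
    have hB : ∀ t : ℝ, HasDerivAt (fun t : ℝ => C * σ ^ (j + (n + 1)) *
        (t ^ (n + 1) / ((n + 1).factorial : ℝ))) (C * σ ^ (j + 1 + n) * (t ^ n / (n.factorial : ℝ))) t := by
      intro t
      have := ((hasDerivAt_pow (n + 1) t).div_const ((n + 1).factorial : ℝ)).const_mul
        (C * σ ^ (j + (n + 1)))
      refine this.congr_deriv ?_
      rw [Nat.factorial_succ, show j + 1 + n = j + (n + 1) by ring]
      have := Nat.factorial_ne_zero n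
      push_cast
      field_simp
    refine image_norm_le_of_norm_deriv_right_le_deriv_boundary (a := 0) (b := s)
      (fun t _ => (hd t).continuousAt.continuousWithinAt)
      (fun t _ => (hd t).hasDerivWithinAt) ?_ hB (fun t ht => ih (j + 1) ht.1) ⟨hs, le_rfl⟩
    rw [Finset.sum_range_succ']
    simp

lemma IsBoundedJet.hasSum_of_nonneg {g : ℕ → ℝ → E} {C σ : ℝ} (h : IsBoundedJet g C σ)
    (j : ℕ) {s : ℝ} (hs : 0 ≤ s) [CompleteSpace E] :
    HasSum (fun m : ℕ => (s ^ m / (m.factorial : ℝ)) • g (j + m) 0) (g j s) := by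
  have hC := h.const_nonneg
  have hsum : Summable fun m : ℕ => (s ^ m / (m.factorial : ℝ)) • g (j + m) 0 := by
    refine Summable.of_norm_bounded
      ((Real.summable_pow_div_factorial (σ * s)).mul_left (C * σ ^ j)) fun m => ?_
    rw [norm_smul, Real.norm_of_nonneg (by positivity)]
    calc _ ≤ s ^ m / (m.factorial : ℝ) * (C * σ ^ (j + m)) := by
          gcongr
          exact h.bound _ _
      _ = _ := by rw [pow_add, mul_pow]; ring
  rw [hsum.hasSum_iff_tendsto_nat, tendsto_iff_norm_sub_tendsto_zero]
  have h0 : Tendsto (fun n : ℕ => C * σ ^ j * ((σ * s) ^ n / (n.factorial : ℝ))) atTop (𝓝 0) := by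
    simpa using (FloorSemiring.tendsto_pow_div_factorial_atTop (σ * s)).const_mul (C * σ ^ j)
  refine squeeze_zero (fun n => norm_nonneg _) (fun n => ?_) h0
  rw [norm_sub_rev]
  refine (h.remainder n j hs).trans_eq ?_
  rw [pow_add, mul_pow]; ring

lemma IsBoundedJet.hasSum_taylor [CompleteSpace E] {g : ℕ → ℝ → E} {C σ : ℝ}
    (h : IsBoundedJet g C σ) (j : ℕ) (x s : ℝ) :
    HasSum (fun m : ℕ => (s ^ m / (m.factorial : ℝ)) • g (j + m) x) (g j (x + s)) := by
  rcases le_total 0 s with hs | hs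
  · simpa using (h.comp_add x).hasSum_of_nonneg j hs
  · have h1 := ((h.comp_add x).comp_mul (-1)).hasSum_of_nonneg j
      (neg_nonneg.2 hs)
    have h2 := h1.const_smul ((-1 : ℝ) ^ j)
    simp only [smul_smul, mul_zero, add_zero] at h2
    have e1 : (-1 : ℝ) ^ j * (-1) ^ j = 1 := by rw [← mul_pow]; simp
    convert h2 using 2 with m
    · congr 1
      rw [neg_pow s, pow_add]
      have e2 : (-1 : ℝ) ^ m * (-1) ^ m = 1 := by rw [← mul_pow]; simp
      have e3 : ((-1 : ℝ) ^ j * (-1) ^ j) * ((-1 : ℝ) ^ m * (-1) ^ m) = 1 := by rw [e1, e2, one_mul]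
      linear_combination (-(s ^ m / (m.factorial : ℝ))) * e3
    · simp [e1]

/-- `cosh(D)` is the average of the translations by `1` and `-1`. -/
lemma IsBoundedJet.hasSum_cosh [CompleteSpace E] {g : ℕ → ℝ → E} {C σ : ℝ}
    (h : IsBoundedJet g C σ) (x : ℝ) (j : ℕ) :
    HasSum (fun m : ℕ => coshCoeff m • g (j + m) x)
      ((1 / 2 : ℝ) • (g j (x + 1) + g j (x - 1))) := by
  have := ((h.hasSum_taylor j x 1).add (h.hasSum_taylor j x (-1))).const_smul (1 / 2 : ℝ)
  refine this.congr_fun fun m => ?_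
  rw [← add_smul, smul_smul, coshCoeff]
  congr 1
  simp
  ring

/-! ### Riesz interpolation and the Bernstein inequality -/

/-- A jet of type `σ < π / 2` that vanishes at `±∞` has alternating sum `0` over the odd integers
(with the indicated signs). Indeed `q = cosh(D) H` for `H = sech(D) q`, so that
`q t = (H (t + 1) + H (t - 1)) / 2` and the sum telescopes, while `H` inherits the decay of `q`. -/
lemma IsBoundedJet.tendsto_alternating_sum [CompleteSpace E] {q : ℕ → ℝ → E} {C σ : ℝ}
    (h : IsBoundedJet q C σ) (hσ : 0 ≤ σ) (hσ' : σ < Real.pi / 2)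
    (htop : ∀ j, Tendsto (q j) atTop (𝓝 0)) (hbot : ∀ j, Tendsto (q j) atBot (𝓝 0)) :
    Tendsto (fun N : ℕ => ∑ k ∈ Finset.range N, (-1 : ℝ) ^ k •
      (q 0 (2 * k + 1) - q 0 (-(2 * k + 1)))) atTop (𝓝 0) := by
  obtain ⟨a, ha, hconv⟩ := exists_sech_coeff
  have ha := ha σ hσ hσ'
  set H : ℝ → E := fun t => ∑' j, a j • q j t with hH
  have hbd : ∀ t j, ‖a j • q j t‖ ≤ C * (|a j| * σ ^ j) := fun t j => by
    rw [norm_smul, Real.norm_eq_abs]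
    calc _ ≤ |a j| * (C * σ ^ j) := by gcongr; exact h.bound j t
      _ = _ := by ring
  have hsum : ∀ t, HasSum (fun j => a j • q j t) (H t) := fun t =>
    (Summable.of_norm_bounded (ha.mul_left C) (hbd t)).hasSum
  have key : ∀ t, q 0 t = (1 / 2 : ℝ) • (H (t + 1) + H (t - 1)) := by
    intro t
    have h1 := hasSum_sech_smul hσ ha hconv (fun j => h.bound j t) (h.hasSum_cosh t)
    have h2 := ((hsum (t + 1)).add (hsum (t - 1))).const_smul (1 / 2 : ℝ)
    refine h1.unique (h2.congr_fun fun j => ?_)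
    rw [smul_comm, smul_add]
  have hlim : ∀ l : Filter ℝ, (∀ j, Tendsto (q j) l (𝓝 0)) → Tendsto H l (𝓝 0) := by
    intro l hl
    have := tendsto_tsum_of_dominated_convergence (𝓕 := l) (f := fun t j => a j • q j t)
      (g := fun _ => (0 : E)) (ha.mul_left C)
      (fun j => by simpa using (hl j).const_smul (a j)) (Eventually.of_forall fun t j => hbd t j)
    simpa using this
  have htel : ∀ N : ℕ, ∑ k ∈ Finset.range N, (-1 : ℝ) ^ k • (q 0 (2 * k + 1) - q 0 (-(2 * k + 1)))
      = -((-1 : ℝ) ^ N • ((1 / 2 : ℝ) • (H (2 * N) - H (-(2 * N))))) := by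
    intro N
    induction N with
    | zero => simp
    | succ N ih =>
      rw [Finset.sum_range_succ, ih, key, key]
      have e1 : (2 * N + 1 + 1 : ℝ) = 2 * ((N + 1 : ℕ) : ℝ) := by push_cast; ring
      have e2 : (2 * N + 1 - 1 : ℝ) = 2 * N := by ring
      have e3 : (-(2 * N + 1) + 1 : ℝ) = -(2 * N) := by ring
      have e4 : (-(2 * N + 1) - 1 : ℝ) = -(2 * ((N + 1 : ℕ) : ℝ)) := by push_cast; ring
      rw [e1, e2, e3, e4, pow_succ]
      module
  simp_rw [htel]
  have hN : Tendsto (fun N : ℕ => (2 * N : ℝ)) atTop atTop :=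
    tendsto_natCast_atTop_atTop.const_mul_atTop (by norm_num)
  have h1 := (hlim _ htop).comp hN
  have h2 := (hlim _ hbot).comp (tendsto_neg_atTop_atBot.comp hN)
  rw [← neg_zero]
  refine Tendsto.neg ?_
  rw [tendsto_zero_iff_norm_tendsto_zero]
  have h3 := ((h1.sub h2).const_smul (1 / 2 : ℝ)).norm
  simp only [sub_zero, smul_zero, norm_zero] at h3
  refine h3.congr fun N => ?_
  simp [norm_smul]

/-- The `j`-th derivative of `t ↦ (g 0 t - g 0 0 - t • g 1 0) / t ^ 2`. The integral form of the
remainder is used since it is also meaningful at `t = 0` and can be differentiated under the integral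
sign; the identification with the quotient is `IsBoundedJet.taylorQuotient_eq`. -/
def taylorQuotient (g : ℕ → ℝ → E) (j : ℕ) (t : ℝ) : E :=
  ∫ s in (0 : ℝ)..1, ((1 - s) * s ^ j) • g (j + 2) (s * t)

lemma abs_weight_le {s : ℝ} (hs : s ∈ Set.uIoc (0 : ℝ) 1) (j : ℕ) : |(1 - s) * s ^ j| ≤ 1 := by
  rw [Set.uIoc_of_le zero_le_one] at hs
  have h1 : 0 ≤ 1 - s := by linarith [hs.2]
  rw [abs_of_nonneg (mul_nonneg h1 (pow_nonneg hs.1.le _))]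
  exact mul_le_one₀ (by linarith [hs.1]) (pow_nonneg hs.1.le _) (pow_le_one₀ hs.1.le hs.2)

lemma IsBoundedJet.taylorQuotient {g : ℕ → ℝ → E} {C σ : ℝ} (h : IsBoundedJet g C σ) :
    IsBoundedJet (taylorQuotient g) (C * σ ^ 2) σ where
  deriv j t := by
    have hc : ∀ (i k : ℕ) (t : ℝ), Continuous fun s : ℝ => ((1 - s) * s ^ i) • g k (s * t) :=
      fun i k t => by
        have := h.continuous k
        fun_prop
    refine (intervalIntegral.hasDerivAt_integral_of_dominated_loc_of_deriv_le
      (F := fun t s => ((1 - s) * s ^ j) • g (j + 2) (s * t))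
      (F' := fun t s => ((1 - s) * s ^ (j + 1)) • g (j + 1 + 2) (s * t))
      (bound := fun _ => C * σ ^ (j + 1 + 2)) (s := Set.univ) univ_mem
      (Eventually.of_forall fun x => (hc _ _ _).aestronglyMeasurable)
      ((hc _ _ _).intervalIntegrable _ _) ((hc _ _ _).aestronglyMeasurable)
      (Eventually.of_forall fun s hs x _ => ?_) (by simp)
      (Eventually.of_forall fun s hs x _ => ?_)).2
    · rw [norm_smul, Real.norm_eq_abs]
      exact (mul_le_of_le_one_left (norm_nonneg _) (abs_weight_le hs _)).trans (h.bound _ _)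
    · have h1 : HasDerivAt (fun t : ℝ => s * t) s x := by
        simpa using (hasDerivAt_id x).const_mul s
      have := ((h.deriv (j + 2) (s * x)).scomp x h1).const_smul ((1 - s) * s ^ j)
      refine this.congr_deriv ?_
      rw [smul_smul, pow_succ, mul_assoc, show j + 2 + 1 = j + 1 + 2 by ring]
  bound j t := by
    have := intervalIntegral.norm_integral_le_of_norm_le_const (a := (0 : ℝ)) (b := 1)
      (f := fun s => ((1 - s) * s ^ j) • g (j + 2) (s * t)) (C := C * σ ^ (j + 2)) fun s hs => by
        rw [norm_smul, Real.norm_eq_abs]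
        exact (mul_le_of_le_one_left (norm_nonneg _) (abs_weight_le hs _)).trans (h.bound _ _)
    refine this.trans_eq ?_
    simp
    ring

lemma IsBoundedJet.hasDerivAt_comp_mul_right {g : ℕ → ℝ → E} {C σ : ℝ} (h : IsBoundedJet g C σ)
    (j : ℕ) (t s : ℝ) : HasDerivAt (fun s : ℝ => g j (s * t)) (t • g (j + 1) (s * t)) s := by
  have h1 : HasDerivAt (fun s : ℝ => s * t) t s := by
    simpa using (hasDerivAt_id s).mul_const t
  exact (h.deriv j (s * t)).scomp s h1

/-- All derivatives of the Taylor quotient are `O(1 / |t|)`, by one integration by parts. -/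
lemma IsBoundedJet.smul_taylorQuotient_le [CompleteSpace E] {g : ℕ → ℝ → E} {C σ : ℝ}
    (h : IsBoundedJet g C σ) (j : ℕ) :
    ∃ K : ℝ, ∀ t : ℝ, ‖t • _root_.taylorQuotient g j t‖ ≤ K := by
  refine ⟨C * σ ^ (j + 1) + (1 + j) * (C * σ ^ (j + 1)), fun t => ?_⟩
  have hu : ∀ s : ℝ, HasDerivAt (fun s : ℝ => (1 - s) * s ^ j)
      (-1 * s ^ j + (1 - s) * (j * s ^ (j - 1))) s := fun s =>
    ((hasDerivAt_id s).const_sub 1).mul (hasDerivAt_pow j s)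
  have hcont := h.continuous (j + 2)
  have hparts := intervalIntegral.integral_smul_deriv_eq_deriv_smul (a := 0) (b := 1)
    (fun s _ => hu s) (fun s _ => h.hasDerivAt_comp_mul_right (j + 1) t s)
    (Continuous.intervalIntegrable (by fun_prop) _ _)
    (Continuous.intervalIntegrable (by fun_prop) _ _)
  have e1 : t • _root_.taylorQuotient g j t
      = ∫ s in (0 : ℝ)..1, ((1 - s) * s ^ j) • t • g (j + 1 + 1) (s * t) := by
    rw [_root_.taylorQuotient, ← intervalIntegral.integral_smul]
    simp_rw [smul_comm t]
  rw [e1, hparts]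
  simp only [sub_self, zero_mul, zero_smul, zero_sub, sub_zero, one_mul]
  refine (norm_sub_le _ _).trans (add_le_add ?_ ?_)
  · rw [norm_neg, norm_smul]
    refine (mul_le_of_le_one_left (norm_nonneg _) ?_).trans (h.bound _ _)
    rcases j with _ | j <;> simp
  · have := intervalIntegral.norm_integral_le_of_norm_le_const (a := (0 : ℝ)) (b := 1)
      (f := fun s => (-1 * s ^ j + (1 - s) * (j * s ^ (j - 1))) • g (j + 1) (s * t))
      (C := (1 + j) * (C * σ ^ (j + 1))) fun s hs => by
        rw [norm_smul, Real.norm_eq_abs]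
        refine mul_le_mul ?_ (h.bound _ _) (norm_nonneg _) (by positivity)
        have hw := abs_weight_le hs (j - 1)
        rw [Set.uIoc_of_le zero_le_one] at hs
        have hp : |s ^ j| ≤ 1 := by
          rw [abs_of_nonneg (pow_nonneg hs.1.le _)]
          exact pow_le_one₀ hs.1.le hs.2
        calc _ ≤ |-1 * s ^ j| + |(1 - s) * (j * s ^ (j - 1))| := abs_add_le _ _
          _ = |s ^ j| + j * |(1 - s) * s ^ (j - 1)| := by
            simp only [abs_mul, abs_neg, abs_one, Nat.abs_cast]
            ring
          _ ≤ 1 + j * 1 := by gcongr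
          _ = _ := by ring
    simpa using this

lemma IsBoundedJet.tendsto_taylorQuotient [CompleteSpace E] {g : ℕ → ℝ → E} {C σ : ℝ}
    (h : IsBoundedJet g C σ) (j : ℕ) {l : Filter ℝ} (hl : Tendsto (fun t : ℝ => |t|) l atTop) :
    Tendsto (_root_.taylorQuotient g j) l (𝓝 0) := by
  obtain ⟨K, hK⟩ := h.smul_taylorQuotient_le j
  refine squeeze_zero_norm' ?_ (hl.const_div_atTop K)
  filter_upwards [hl.eventually_gt_atTop 0] with t ht
  rw [le_div_iff₀ ht, mul_comm]
  simpa [norm_smul] using hK t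

lemma IsBoundedJet.taylorQuotient_eq [CompleteSpace E] {g : ℕ → ℝ → E} {C σ : ℝ}
    (h : IsBoundedJet g C σ) {t : ℝ} (ht : t ≠ 0) :
    _root_.taylorQuotient g 0 t = (t ^ 2)⁻¹ • (g 0 t - g 0 0) - t⁻¹ • g 1 0 := by
  have hd : ∀ s : ℝ, HasDerivAt
      (fun s : ℝ => (1 - s) • t⁻¹ • g 1 (s * t) + (t ^ 2)⁻¹ • g 0 (s * t))
      (((1 - s) * s ^ 0) • g (0 + 2) (s * t)) s := by
    intro s
    have h1 := ((hasDerivAt_id s).const_sub 1).smul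
      ((h.hasDerivAt_comp_mul_right 1 t s).const_smul t⁻¹)
    have h2 := (h.hasDerivAt_comp_mul_right 0 t s).const_smul (t ^ 2)⁻¹
    refine (h1.add h2).congr_deriv ?_
    have e : (t ^ 2)⁻¹ * t = t⁻¹ := by field_simp
    simp only [Pi.smul_apply, smul_smul, inv_mul_cancel₀ ht, e, id, zero_add, pow_zero, mul_one, one_smul,
      Nat.reduceAdd]
    module
  have hcont := h.continuous (0 + 2)
  rw [_root_.taylorQuotient, intervalIntegral.integral_eq_sub_of_hasDerivAt (fun s _ => hd s)
    (Continuous.intervalIntegrable (by fun_prop) _ _)]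
  simp
  module

lemma hasSum_odd_sq_inv : HasSum (fun k : ℕ => ((2 * (k : ℝ) + 1) ^ 2)⁻¹) (Real.pi ^ 2 / 8) := by
  have h := hasSum_zeta_two
  have he : HasSum (fun k : ℕ => 1 / ((2 * k : ℕ) : ℝ) ^ 2) (1 / 4 * (Real.pi ^ 2 / 6)) := by
    refine (h.mul_left (1 / 4)).congr_fun fun k => ?_
    push_cast
    rw [mul_pow, one_div, mul_inv]
    norm_num
  have hinj : Function.Injective fun k : ℕ => 2 * k + 1 := fun a b hab => by
    simpa using hab
  have hs : Summable fun k : ℕ => 1 / ((2 * k + 1 : ℕ) : ℝ) ^ 2 := h.summable.comp_injective hinj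
  obtain ⟨S, hS⟩ := hs
  have hu := (HasSum.even_add_odd (f := fun n : ℕ => (1 : ℝ) / (n : ℝ) ^ 2) he hS).unique h
  have hv : S = Real.pi ^ 2 / 8 := by linarith
  rw [← hv]
  refine hS.congr_fun fun k => ?_
  push_cast
  rw [one_div]

/-- Bernstein's inequality with constant `π / 2` for every type below `π / 2`. The alternating sum
for the Taylor quotient gives M. Riesz's interpolation formula
`2 (∑ (-1) ^ k / (2k+1)) g'(0) = ∑ (-1) ^ k (g (2k+1) - g (-(2k+1))) / (2k+1) ^ 2`, whose left-hand
side is `(π / 2) g'(0)` and whose right-hand side is bounded by `2 M (π ^ 2 / 8)`. -/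
lemma IsBoundedJet.norm_deriv_le_pi_div_two [CompleteSpace E] {g : ℕ → ℝ → E} {C σ M : ℝ}
    (h : IsBoundedJet g C σ) (hσ : 0 ≤ σ) (hσ' : σ < Real.pi / 2) (hM : ∀ t, ‖g 0 t‖ ≤ M) :
    ‖g 1 0‖ ≤ Real.pi / 2 * M := by
  have hM0 : 0 ≤ M := (norm_nonneg _).trans (hM 0)
  set D : ℕ → E := fun N => ∑ k ∈ Finset.range N, (-1 : ℝ) ^ k •
      (_root_.taylorQuotient g 0 (2 * k + 1) - _root_.taylorQuotient g 0 (-(2 * k + 1))) with hD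
  have hDlim : Tendsto D atTop (𝓝 0) := h.taylorQuotient.tendsto_alternating_sum hσ hσ'
    (fun j => h.tendsto_taylorQuotient j tendsto_abs_atTop_atTop)
    (fun j => h.tendsto_taylorQuotient j tendsto_abs_atBot_atTop)
  set L : ℕ → ℝ := fun N => ∑ k ∈ Finset.range N, (-1 : ℝ) ^ k / (2 * k + 1) with hL
  have hbound : ∀ N, 2 * L N * ‖g 1 0‖ ≤ 2 * M * (Real.pi ^ 2 / 8) + ‖D N‖ := by
    intro N
    have e : (2 * L N) • g 1 0 = (∑ k ∈ Finset.range N, (-1 : ℝ) ^ k •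
        (((2 * (k : ℝ) + 1) ^ 2)⁻¹ • (g 0 (2 * k + 1) - g 0 (-(2 * k + 1))))) - D N := by
      rw [hD, hL]
      simp only
      rw [← Finset.sum_sub_distrib, Finset.mul_sum, Finset.sum_smul]
      refine Finset.sum_congr rfl fun k _ => ?_
      have hk : (2 * (k : ℝ) + 1) ≠ 0 := by positivity
      rw [h.taylorQuotient_eq hk, h.taylorQuotient_eq (neg_ne_zero.2 hk), neg_sq, inv_neg,
        div_eq_mul_inv]
      module
    have e2 : ‖∑ k ∈ Finset.range N, (-1 : ℝ) ^ k •
        (((2 * (k : ℝ) + 1) ^ 2)⁻¹ • (g 0 (2 * k + 1) - g 0 (-(2 * k + 1))))‖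
        ≤ 2 * M * (Real.pi ^ 2 / 8) := by
      calc _ ≤ ∑ k ∈ Finset.range N, 2 * M * ((2 * (k : ℝ) + 1) ^ 2)⁻¹ := by
            refine norm_sum_le_of_le _ fun k _ => ?_
            rw [norm_smul, norm_smul, norm_pow, norm_neg, norm_one, one_pow, one_mul,
              Real.norm_of_nonneg (by positivity), mul_comm]
            gcongr
            exact (norm_sub_le _ _).trans (by linarith [hM (2 * k + 1), hM (-(2 * k + 1))])
        _ = 2 * M * ∑ k ∈ Finset.range N, ((2 * (k : ℝ) + 1) ^ 2)⁻¹ := by rw [Finset.mul_sum]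
        _ ≤ _ := by
            gcongr
            exact sum_le_hasSum _ (fun k _ => by positivity) hasSum_odd_sq_inv
    calc _ ≤ ‖(2 * L N) • g 1 0‖ := by
          rw [norm_smul]
          gcongr
          exact le_abs_self _
      _ ≤ _ := by
          rw [e]
          exact (norm_sub_le _ _).trans (by linarith)
  have h1 : Tendsto (fun N => 2 * L N * ‖g 1 0‖) atTop (𝓝 (2 * (Real.pi / 4) * ‖g 1 0‖)) :=
    (Real.tendsto_sum_pi_div_four.const_mul 2).mul_const _
  have h2 : Tendsto (fun N => 2 * M * (Real.pi ^ 2 / 8) + ‖D N‖) atTop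
      (𝓝 (2 * M * (Real.pi ^ 2 / 8) + 0)) := by
    refine Tendsto.const_add _ ?_
    simpa using hDlim.norm
  have h3 := le_of_tendsto_of_tendsto' h1 h2 hbound
  have hpi := Real.pi_pos
  have h4 : Real.pi / 2 * ‖g 1 0‖ ≤ Real.pi / 2 * (Real.pi / 2 * M) := by linarith
  exact le_of_mul_le_mul_left h4 (by positivity)

/-- **Bernstein's inequality** for bounded vector-valued functions of exponential type. The constant
`C` in the type bound plays no role in the conclusion. -/
theorem IsBoundedJet.bernstein [CompleteSpace E] {g : ℕ → ℝ → E} {C σ M : ℝ}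
    (h : IsBoundedJet g C σ) (hσ : 0 < σ) (hM : ∀ t, ‖g 0 t‖ ≤ M) : ‖g 1 0‖ ≤ σ * M := by
  have hpi := Real.pi_pos
  -- The rescaled jet `t ↦ g (l t)` has type `l σ < π / 2`, and `l` may approach `π / (2 σ)`.
  have hl : ∀ l : ℝ, 0 < l → l < Real.pi / 2 / σ → l * ‖g 1 0‖ ≤ Real.pi / 2 * M := by
    intro l hl0 hl
    have := (h.comp_mul l).norm_deriv_le_pi_div_two (M := M) (by positivity)
      (by rwa [abs_of_pos hl0, ← lt_div_iff₀ hσ]) (fun t => by simpa using hM _)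
    simpa [norm_smul, abs_of_pos hl0] using this
  have hpos : 0 < Real.pi / 2 / σ := by positivity
  have h1 : Tendsto (fun l : ℝ => l * ‖g 1 0‖) (𝓝[<] (Real.pi / 2 / σ))
      (𝓝 (Real.pi / 2 / σ * ‖g 1 0‖)) :=
    (tendsto_id.mul_const _).mono_left nhdsWithin_le_nhds
  have h2 : Real.pi / 2 / σ * ‖g 1 0‖ ≤ Real.pi / 2 * M := by
    refine le_of_tendsto h1 ?_
    filter_upwards [Ioo_mem_nhdsLT hpos] with l hl' using hl l hl'.1 hl'.2
  have h3 : Real.pi / 2 / σ * ‖g 1 0‖ ≤ Real.pi / 2 / σ * (σ * M) := by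
    refine h2.trans_eq ?_
    field_simp
  exact le_of_mul_le_mul_left h3 hpos

end Jet

/-! ### Growth of the orbit of the generator -/

section Group

variable {B : Type*} [NormedAddCommGroup B] [NormedSpace ℂ B] {T : ℝ → B →L[ℂ] B}

lemma GenDeriv.hasDerivAt_s4 (hTadd : ∀ s t : ℝ, T (s + t) = T s * T t) {u v : B}
    (h : GenDeriv T u v) (t : ℝ) : HasDerivAt (fun s => T s u) (T t v) t := by
  rw [hasDerivAt_iff_tendsto_slope_zero]
  refine (((T t).continuous.tendsto v).comp h).congr fun s => ?_
  simp [hTadd, (T t).map_smul_of_tower]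

lemma GenDeriv.sum_smul {ι : Type*} (s : Finset ι) (b : ι → ℂ) {u v : ι → B}
    (h : ∀ i ∈ s, GenDeriv T (u i) (v i)) :
    GenDeriv T (∑ i ∈ s, b i • u i) (∑ i ∈ s, b i • v i) := by
  refine (tendsto_finsetSum s fun i hi => (h i hi).const_smul (b i)).congr fun t => ?_
  rw [map_sum, ← Finset.sum_sub_distrib, Finset.smul_sum]
  refine Finset.sum_congr rfl fun i _ => ?_
  rw [map_smul, ← smul_sub, smul_comm]

/-- The resolvent estimate for the generator of a group of isometries, `v = D u`. It follows from
`‖(1 + t z) u - T(t) u‖ ≥ (1 + t Re z) ‖u‖ - ‖u‖` for `t` of either sign. -/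
lemma GenDeriv.abs_re_mul_norm_le (hTiso : ∀ (t : ℝ) (f : B), ‖T t f‖ = ‖f‖) {u v : B}
    (h : GenDeriv T u v) (z : ℂ) : |z.re| * ‖u‖ ≤ ‖z • u - v‖ := by
  have hlim : Tendsto (fun t : ℝ => ‖z • u - t⁻¹ • (T t u - u)‖) (𝓝[≠] (0 : ℝ)) (𝓝 ‖z • u - v‖) :=
    (h.const_sub _).norm
  have hineq : ∀ t : ℝ, t ≠ 0 → t * z.re * ‖u‖ ≤ |t| * ‖z • u - t⁻¹ • (T t u - u)‖ := by
    intro t ht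
    have e : t • (z • u - t⁻¹ • (T t u - u)) = ((1 : ℂ) + t * z) • u - T t u := by
      rw [smul_sub, smul_smul, mul_inv_cancel₀ ht, one_smul, add_smul, one_smul, mul_smul,
        Complex.coe_smul]
      abel
    rw [← Real.norm_eq_abs, ← norm_smul, e]
    have h1 := norm_sub_norm_le (((1 : ℂ) + t * z) • u) (T t u)
    rw [hTiso, norm_smul] at h1
    have h2 : 1 + t * z.re ≤ ‖(1 : ℂ) + t * z‖ := by
      simpa using Complex.re_le_norm ((1 : ℂ) + t * z)
    nlinarith [norm_nonneg u]
  have hpos : z.re * ‖u‖ ≤ ‖z • u - v‖ := by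
    refine ge_of_tendsto (hlim.mono_left (nhdsGT_le_nhdsNE 0)) ?_
    filter_upwards [self_mem_nhdsWithin] with t ht
    have ht : 0 < t := ht
    have := hineq t ht.ne'
    rw [abs_of_pos ht, mul_assoc] at this
    exact le_of_mul_le_mul_left this ht
  have hneg : -z.re * ‖u‖ ≤ ‖z • u - v‖ := by
    refine ge_of_tendsto (hlim.mono_left (nhdsLT_le_nhdsNE 0)) ?_
    filter_upwards [self_mem_nhdsWithin] with t ht
    have ht : t < 0 := ht
    have := hineq t ht.ne
    rw [abs_of_neg ht] at this
    refine le_of_mul_le_mul_left ?_ (neg_pos.2 ht)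
    linarith
  rcases abs_choice z.re with h | h <;> rw [h] <;> assumption

/-- On the circle of radius `r` the polynomial `z ^ 2 + r ^ 2` cancels the singular factor
`1 / |Re z|` of the resolvent estimate. -/
lemma norm_sq_add_sq_of_norm_eq {z : ℂ} {r : ℝ} (hz : ‖z‖ = r) :
    ‖z ^ 2 + (r : ℂ) ^ 2‖ = 2 * r * |z.re| := by
  have e : z ^ 2 + (r : ℂ) ^ 2 = z * ((2 * z.re : ℝ) : ℂ) := by
    have h1 : (r : ℂ) ^ 2 = z * (starRingEnd ℂ) z := by
      rw [Complex.mul_conj, Complex.normSq_eq_norm_sq, hz]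
      push_cast
      rfl
    rw [h1, ← Complex.add_conj]
    ring
  rw [e, norm_mul, hz, Complex.norm_real, Real.norm_eq_abs, abs_mul, abs_two]
  ring

/-- A bound at the single order `n` controls all the lower combinations `D^(k+2) f + r ^ 2 D^k f`,
with a constant independent of `n`. They are coefficients of the polynomial `(z ^ 2 + r ^ 2) P z`
with `P z = ∑ i < n, z ^ (n-1-i) D^i f`. Since `(z - D) P z = z ^ n f - D^n f`, the resolvent
estimate bounds this polynomial on the circle `|z| = r`, and Cauchy's estimates bound its
coefficients. -/
lemma norm_chain_add_le [CompleteSpace B] (hTiso : ∀ (t : ℝ) (f : B), ‖T t f‖ = ‖f‖)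
    {c : ℕ → B} (hc : ∀ i, GenDeriv T (c i) (c (i + 1))) {r : ℝ} (hr : 0 < r) {n : ℕ}
    (hn : ‖c n‖ ≤ r ^ n) {k : ℕ} (hk : k + 2 < n) :
    ‖c (k + 2) + (r : ℂ) ^ 2 • c k‖ ≤ 2 * (‖c 0‖ + 1) * r ^ (k + 2) := by
  set P : ℂ → B := fun z => ∑ i ∈ Finset.range n, z ^ (n - 1 - i) • c i with hP
  have hPres : ∀ z : ℂ, ‖z‖ = r → |z.re| * ‖P z‖ ≤ r ^ n * (‖c 0‖ + 1) := by
    intro z hz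
    have h1 := (GenDeriv.sum_smul (Finset.range n) (fun i => z ^ (n - 1 - i))
      fun i _ => hc i).abs_re_mul_norm_le hTiso z
    have e : z • P z - ∑ i ∈ Finset.range n, z ^ (n - 1 - i) • c (i + 1) = z ^ n • c 0 - c n := by
      have := Finset.sum_range_sub' (fun i => z ^ (n - i) • c i) n
      simp only [Nat.sub_zero, Nat.sub_self, pow_zero, one_smul] at this
      rw [← this, hP]
      simp only
      rw [Finset.smul_sum, ← Finset.sum_sub_distrib]
      refine Finset.sum_congr rfl fun i hi => ?_
      have hi : i < n := Finset.mem_range.1 hi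
      rw [smul_smul, ← pow_succ', show n - 1 - i + 1 = n - i by omega,
        show n - (i + 1) = n - 1 - i by omega]
    rw [e] at h1
    refine h1.trans ((norm_sub_le _ _).trans ?_)
    rw [norm_smul, norm_pow, hz]
    linarith
  set R : ℂ → B := fun z => ∑ i ∈ Finset.range n,
    (z ^ (n + 1 - i) • c i + z ^ (n - 1 - i) • ((r : ℂ) ^ 2 • c i)) with hR
  have hRP : ∀ z, R z = (z ^ 2 + (r : ℂ) ^ 2) • P z := by
    intro z
    rw [hR, hP]
    simp only
    rw [Finset.smul_sum]
    refine Finset.sum_congr rfl fun i hi => ?_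
    have hi : i < n := Finset.mem_range.1 hi
    rw [show n + 1 - i = 2 + (n - 1 - i) by omega, pow_add]
    module
  have hRle : ∀ z ∈ Metric.sphere (0 : ℂ) r, ‖R z‖ ≤ 2 * r * (r ^ n * (‖c 0‖ + 1)) := by
    intro z hz
    have hz : ‖z‖ = r := by simpa using hz
    rw [hRP, norm_smul, norm_sq_add_sq_of_norm_eq hz, mul_assoc]
    exact mul_le_mul_of_nonneg_left (hPres z hz) (by positivity)
  have hRd : Differentiable ℂ R := by
    rw [hR]
    fun_prop
  have hcoef := Complex.norm_iteratedDeriv_le_of_forall_mem_sphere_norm_le (n - 1 - k) hr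
    hRd.diffContOnCl hRle
  have hval : iteratedDeriv (n - 1 - k) R 0
      = ((n - 1 - k).factorial : ℂ) • (c (k + 2) + (r : ℂ) ^ 2 • c k) := by
    have hcd : ∀ m : ℕ, ContDiffAt ℂ ((n - 1 - k : ℕ) : ℕ∞) (fun z : ℂ => z ^ m) 0 := fun m => by
      fun_prop
    have hcd' : ∀ (m : ℕ) (b : B),
        ContDiffAt ℂ ((n - 1 - k : ℕ) : ℕ∞) (fun z : ℂ => z ^ m • b) 0 := fun m b => by
      fun_prop
    rw [hR, iteratedDeriv_fun_sum fun i _ => (hcd' _ _).add (hcd' _ _)]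
    have h1 : ∀ i ∈ Finset.range n, iteratedDeriv (n - 1 - k) (fun z : ℂ =>
        z ^ (n + 1 - i) • c i + z ^ (n - 1 - i) • ((r : ℂ) ^ 2 • c i)) 0
        = (if i = k + 2 then ((n - 1 - k).factorial : ℂ) • c (k + 2) else 0)
          + (if i = k then ((n - 1 - k).factorial : ℂ) • ((r : ℂ) ^ 2 • c k) else 0) := by
      intro i hi
      have hi : i < n := Finset.mem_range.1 hi
      rw [iteratedDeriv_fun_add (hcd' _ _) (hcd' _ _), iteratedDeriv_smul_const (hcd _),
        iteratedDeriv_smul_const (hcd _), iteratedDeriv_fun_pow_zero, iteratedDeriv_fun_pow_zero]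
      congr 1
      · by_cases h : i = k + 2
        · subst h
          rw [if_pos (by omega), if_pos rfl, show n + 1 - (k + 2) = n - 1 - k by omega]
        · rw [if_neg (by omega), if_neg h]
          simp
      · by_cases h : i = k
        · subst h
          rw [if_pos rfl, if_pos rfl]
        · rw [if_neg (by omega), if_neg h]
          simp
    rw [Finset.sum_congr rfl h1, Finset.sum_add_distrib, Finset.sum_ite_eq', Finset.sum_ite_eq',
      if_pos (Finset.mem_range.2 hk), if_pos (Finset.mem_range.2 (by omega)), smul_add]
  rw [hval, norm_smul, Complex.norm_natCast, mul_div_assoc] at hcoef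
  have hfac : (0 : ℝ) < (n - 1 - k).factorial := by exact_mod_cast Nat.factorial_pos _
  refine (le_of_mul_le_mul_left hcoef hfac).trans_eq ?_
  rw [div_eq_iff (by positivity)]
  have : r ^ n * r = r ^ (k + 2) * r ^ (n - 1 - k) := by
    rw [← pow_add, ← pow_succ]
    congr 1
    omega
  linear_combination (2 * (‖c 0‖ + 1)) * this

/-- Exponential growth at rate `s > r`: the two combinations with `r ^ 2` and `s ^ 2` differ by
`(s ^ 2 - r ^ 2) D^k f`. -/
lemma exists_norm_chain_le [CompleteSpace B] (hTiso : ∀ (t : ℝ) (f : B), ‖T t f‖ = ‖f‖)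
    {c : ℕ → B} (hc : ∀ i, GenDeriv T (c i) (c (i + 1))) {r s : ℝ} (hr : 0 < r) (hrs : r < s)
    (hfreq : ∃ᶠ n in atTop, ‖c n‖ ≤ r ^ n) : ∃ C : ℝ, ∀ k, ‖c k‖ ≤ C * s ^ k := by
  have hs : 0 < s := hr.trans hrs
  have hgap : 0 < s ^ 2 - r ^ 2 := by nlinarith
  refine ⟨4 * (‖c 0‖ + 1) * s ^ 2 / (s ^ 2 - r ^ 2), fun k => ?_⟩
  obtain ⟨n, hn, hkn⟩ := (hfreq.and_eventually (eventually_gt_atTop (k + 2))).exists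
  have h1 := norm_chain_add_le hTiso hc hr hn hkn
  have h2 := norm_chain_add_le hTiso hc hs (hn.trans (by gcongr)) hkn
  have e : ((s : ℂ) ^ 2 - (r : ℂ) ^ 2) • c k
      = (c (k + 2) + (s : ℂ) ^ 2 • c k) - (c (k + 2) + (r : ℂ) ^ 2 • c k) := by
    module
  have e2 : ‖(s : ℂ) ^ 2 - (r : ℂ) ^ 2‖ = s ^ 2 - r ^ 2 := by
    rw [← Complex.ofReal_pow, ← Complex.ofReal_pow, ← Complex.ofReal_sub, Complex.norm_real,
      Real.norm_of_nonneg hgap.le]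
  have h3 : (s ^ 2 - r ^ 2) * ‖c k‖ ≤ 4 * (‖c 0‖ + 1) * s ^ (k + 2) := by
    rw [← e2, ← norm_smul, e]
    -- Both combinations are bounded by the larger radius.
    have h4 : 2 * (‖c 0‖ + 1) * r ^ (k + 2) ≤ 2 * (‖c 0‖ + 1) * s ^ (k + 2) := by gcongr
    exact (norm_sub_le _ _).trans (by linarith)
  rw [div_mul_eq_mul_div, le_div_iff₀ hgap, mul_comm]
  refine h3.trans_eq ?_
  ring

/-- An exponential bound with any constant `C` improves to `C = ‖f‖`, by Bernstein's inequality for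
the orbits `t ↦ T(t) D^k f`. -/
lemma norm_chain_le_of_exists [CompleteSpace B]
    (hTadd : ∀ s t : ℝ, T (s + t) = T s * T t) (hTiso : ∀ (t : ℝ) (f : B), ‖T t f‖ = ‖f‖)
    {c : ℕ → B} (hc : ∀ i, GenDeriv T (c i) (c (i + 1))) {σ C : ℝ} (hσ : 0 < σ)
    (hC : ∀ k, ‖c k‖ ≤ C * σ ^ k) (k : ℕ) : ‖c k‖ ≤ σ ^ k * ‖c 0‖ := by
  have hjet : IsBoundedJet (fun j t => T t (c j)) C σ :=
    ⟨fun j t => (hc j).hasDerivAt_s4 hTadd t, fun j t => by rw [hTiso]; exact hC j⟩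
  induction k with
  | zero => simp
  | succ k ih =>
    have h := (hjet.shift k).bernstein hσ (M := ‖c k‖) fun t => by simp [hTiso]
    rw [hTiso, add_comm] at h
    calc _ ≤ σ * ‖c k‖ := h
      _ ≤ σ * (σ ^ k * ‖c 0‖) := by gcongr
      _ = _ := by rw [pow_succ]; ring

/-- If `‖D^n f‖ ≤ r ^ n` for infinitely many `n`, then `f` satisfies the Bernstein inequality of
type `r`. -/
theorem norm_chain_le_of_frequently [CompleteSpace B]
    (hTadd : ∀ s t : ℝ, T (s + t) = T s * T t) (hTiso : ∀ (t : ℝ) (f : B), ‖T t f‖ = ‖f‖)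
    {c : ℕ → B} (hc : ∀ i, GenDeriv T (c i) (c (i + 1))) {r : ℝ} (hr : 0 < r)
    (hfreq : ∃ᶠ n in atTop, ‖c n‖ ≤ r ^ n) (k : ℕ) : ‖c k‖ ≤ r ^ k * ‖c 0‖ := by
  have hlim : Tendsto (fun s : ℝ => s ^ k * ‖c 0‖) (𝓝[>] r) (𝓝 (r ^ k * ‖c 0‖)) :=
    ((tendsto_id.pow k).mul_const _).mono_left nhdsWithin_le_nhds
  refine ge_of_tendsto hlim ?_
  filter_upwards [self_mem_nhdsWithin] with s hs
  obtain ⟨C, hC⟩ := exists_norm_chain_le hTiso hc hr hs hfreq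
  exact norm_chain_le_of_exists hTadd hTiso hc (hr.trans hs) hC k

end Group

/-! ### The limit of the roots -/

lemma rpow_one_div_le_iff {x r : ℝ} (hx : 0 ≤ x) (hr : 0 ≤ r) {k : ℕ} (hk : k ≠ 0) :
    x ^ (1 / (k : ℝ)) ≤ r ↔ x ≤ r ^ k := by
  rw [one_div, Real.rpow_inv_le_iff_of_pos hx hr (by positivity), Real.rpow_natCast]

/-- The root limit for a real sequence in which `a n ≤ r ^ n` infinitely often already forces
`a k ≤ r ^ k * a 0` for all `k`: the roots converge to the least admissible constant. They cannot
drop below some `ρ` less than the infimum infinitely often, as then any `r` strictly in between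
would be admissible. -/
theorem tendsto_root_sInf {a : ℕ → ℝ} (ha : ∀ k, 0 ≤ a k)
    (hfreq : ∀ r, 0 < r → (∃ᶠ n in atTop, a n ≤ r ^ n) → ∀ k, a k ≤ r ^ k * a 0)
    (hne : ∃ σ : ℝ, 0 < σ ∧ ∀ k, a k ≤ σ ^ k * a 0) :
    Tendsto (fun k : ℕ => a k ^ (1 / (k : ℝ))) atTop
        (𝓝 (sInf {σ : ℝ | 0 < σ ∧ ∀ k, a k ≤ σ ^ k * a 0})) ∧
      ∀ k, a k ≤ (sInf {σ : ℝ | 0 < σ ∧ ∀ k, a k ≤ σ ^ k * a 0}) ^ k * a 0 := by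
  set S : Set ℝ := {σ : ℝ | 0 < σ ∧ ∀ k, a k ≤ σ ^ k * a 0} with hS
  set d := sInf S with hd
  have hbdd : BddBelow S := ⟨0, fun σ hσ => hσ.1.le⟩
  have hSne : S.Nonempty := hne
  have hd0 : 0 ≤ d := le_csInf hSne fun σ hσ => hσ.1.le
  have hmain : ∀ k, a k ≤ d ^ k * a 0 := by
    intro k
    have hclosed : IsClosed {σ : ℝ | a k ≤ σ ^ k * a 0} :=
      isClosed_le continuous_const (by fun_prop)
    exact hclosed.closure_subset_iff.2 (fun σ hσ => hσ.2 k) (csInf_mem_closure hSne hbdd)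
  refine ⟨?_, hmain⟩
  -- `a 0 + 1` replaces `a 0` to have a positive base also when `a 0 = 0`.
  have hupper : ∀ k : ℕ, k ≠ 0 → a k ^ (1 / (k : ℝ)) ≤ d * (a 0 + 1) ^ (1 / (k : ℝ)) := by
    intro k hk
    have h0 : 0 ≤ a 0 + 1 := by linarith [ha 0]
    rw [rpow_one_div_le_iff (ha k) (by positivity) hk, mul_pow, one_div,
      Real.rpow_inv_natCast_pow h0 hk]
    refine (hmain k).trans ?_
    gcongr
    linarith
  have hupperlim : Tendsto (fun k : ℕ => d * (a 0 + 1) ^ (1 / (k : ℝ))) atTop (𝓝 d) := by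
    have h0 : a 0 + 1 ≠ 0 := by linarith [ha 0]
    have h1 := (Real.continuousAt_const_rpow h0).tendsto.comp
      (tendsto_one_div_atTop_nhds_zero_nat (𝕜 := ℝ))
    simpa using h1.const_mul d
  refine tendsto_order.2 ⟨fun ρ hρ => ?_, fun ρ hρ => ?_⟩
  · obtain ⟨r, hr, hrd⟩ := exists_between hρ
    by_contra hcon
    have hcon : ∃ᶠ k : ℕ in atTop, a k ^ (1 / (k : ℝ)) ≤ ρ := by
      simpa [Filter.Frequently] using hcon
    have hρ0 : 0 ≤ ρ := by
      obtain ⟨k, hk⟩ := hcon.exists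
      exact (Real.rpow_nonneg (ha k) _).trans hk
    have hr0 : 0 < r := hρ0.trans_lt hr
    have hrS : r ∈ S := ⟨hr0, hfreq r hr0 <|
      (hcon.and_eventually (eventually_ne_atTop 0)).mono fun k hk =>
        (rpow_one_div_le_iff (ha k) hr0.le hk.2).1 (hk.1.trans hr.le)⟩
    exact absurd (csInf_le hbdd hrS) (not_le.2 hrd)
  · filter_upwards [hupperlim.eventually_lt_const hρ, eventually_ne_atTop 0] with k hk hk0
    exact (hupper k hk0).trans_lt hk

/-- Characterization of the exact Bernstein type.  For `f ∈ D^∞(D)` with derivative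
chain `c` (`c k = D^k f`): if `f ∈ B_σ(D)` for some `σ > 0`, then
`d_f = lim_k ‖D^k f‖^{1/k}` exists, `f ∈ B_{d_f}(D)` and `d_f = σ_f`, the smallest `σ`
for which the Bernstein inequality holds; conversely, if the limit `d_f` exists and is
finite then `f ∈ B_{d_f}(D)` and `d_f = σ_f`. -/
theorem bernstein_exact_type
    {B : Type*} [NormedAddCommGroup B] [NormedSpace ℂ B] [CompleteSpace B]
    (T : ℝ → B →L[ℂ] B)
    (hT1 : T 0 = 1) (hTadd : ∀ s t : ℝ, T (s + t) = T s * T t)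
    (hTiso : ∀ (t : ℝ) (f : B), ‖T t f‖ = ‖f‖)
    (hTcont : ∀ f : B, Continuous fun t : ℝ => T t f)
    (f : B) (c : ℕ → B) (hc0 : c 0 = f) (hc : ∀ i : ℕ, GenDeriv T (c i) (c (i + 1))) :
    ((∃ σ : ℝ, 0 < σ ∧ ∀ k : ℕ, ‖c k‖ ≤ σ ^ k * ‖f‖) →
      ∃ d : ℝ, Filter.Tendsto (fun k : ℕ => ‖c k‖ ^ (1 / (k : ℝ))) Filter.atTop (𝓝 d) ∧
        (∀ k : ℕ, ‖c k‖ ≤ d ^ k * ‖f‖) ∧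
        d = sInf {σ : ℝ | 0 < σ ∧ ∀ k : ℕ, ‖c k‖ ≤ σ ^ k * ‖f‖}) ∧
    (∀ d : ℝ, Filter.Tendsto (fun k : ℕ => ‖c k‖ ^ (1 / (k : ℝ))) Filter.atTop (𝓝 d) →
      (∀ k : ℕ, ‖c k‖ ≤ d ^ k * ‖f‖) ∧
      d = sInf {σ : ℝ | 0 < σ ∧ ∀ k : ℕ, ‖c k‖ ≤ σ ^ k * ‖f‖}) := by
  subst hc0
  have hfreq : ∀ r : ℝ, 0 < r → (∃ᶠ n in atTop, ‖c n‖ ≤ r ^ n) → ∀ k, ‖c k‖ ≤ r ^ k * ‖c 0‖ :=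
    fun r hr h => norm_chain_le_of_frequently hTadd hTiso hc hr h
  have hroot := tendsto_root_sInf (a := fun k => ‖c k‖) (fun k => norm_nonneg _) hfreq
  refine ⟨fun h => ⟨_, (hroot h).1, (hroot h).2, rfl⟩, fun d hd => ?_⟩
  have hd0 : 0 ≤ d := ge_of_tendsto' hd fun k => Real.rpow_nonneg (norm_nonneg _) _
  have hd1 : 0 < d + 1 := by linarith
  have hne : ∃ σ : ℝ, 0 < σ ∧ ∀ k : ℕ, ‖c k‖ ≤ σ ^ k * ‖c 0‖ := by
    -- The roots eventually stay below `d + 1`; `d` itself may be `0`, which is not admissible.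
    refine ⟨d + 1, hd1, hfreq _ hd1 (Eventually.frequently ?_)⟩
    filter_upwards [hd.eventually_lt_const (lt_add_one d), eventually_ne_atTop 0] with k hk hk0
    exact (rpow_one_div_le_iff (norm_nonneg _) hd1.le hk0).1 hk.le
  have heq := tendsto_nhds_unique hd (hroot hne).1
  exact ⟨fun k => by rw [heq]; exact (hroot hne).2 k, heq⟩
end
end
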